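/- arXiv:2502.08315 — 9 statements merged into one kernel-verified Lean document; each statement's English description precedes it below -/
import Mathlib

section
/- Let X be a real Hilbert space and let Q_n (n ∈ ℕ) and Q be bounded idempotent operators on X (Q_n ∘ Q_n = Q_n and Q ∘ Q = Q) such that Q_n → Q in the operator norm. Set S_n := range(Q_n) and S := range(Q) (which are closed subspaces of X), and let P_n and P denote the orthogonal projections of X onto S_n and S respectively. Then P_n → P in the operator norm. -/
/-!
Let `P` and `R` be the orthogonal projections onto the ranges of idempotents `A` and `B`. A vector
`x` in the range of `B` satisfies `B x = x`, so its distance to the range of `A` is at most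
`‖x - A x‖ = ‖(A - B) x‖ ≤ ‖A - B‖ * ‖x‖`. By symmetry, the gap between the two ranges is at most
`‖A - B‖`. The gap bounds `‖P - R‖`: in `P x - R x = P (x - R x) - (R x - P (R x))` the two terms on
the right are orthogonal, and each is bounded by the gap times the norm of the matching component
of the orthogonal decomposition `x = (x - R x) + R x`. Hence `‖P - R‖ ≤ ‖A - B‖`.
-/

open Filter

/-- `P` is the orthogonal projection of `X` onto the subspace `E`. -/
def IsOrthoProjOn {X : Type*} [NormedAddCommGroup X] [InnerProductSpace ℝ X]
    (E : Submodule ℝ X) (P : X →L[ℝ] X) : Prop :=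
  ∀ x : X, P x ∈ E ∧ x - P x ∈ Eᗮ

section Gap

variable {𝕜 X : Type*} [RCLike 𝕜] [NormedAddCommGroup X] [InnerProductSpace 𝕜 X]
  {E F : Submodule 𝕜 X} [E.HasOrthogonalProjection] {c : ℝ}

theorem norm_sub_starProjection_le_norm_sub_of_mem (x : X) {z : X} (hz : z ∈ E) :
    ‖x - E.starProjection x‖ ≤ ‖x - z‖ := by
  rw [E.starProjection_minimal]
  exact ciInf_le ⟨0, Set.forall_mem_range.2 fun _ ↦ norm_nonneg _⟩ (⟨z, hz⟩ : E)

variable [F.HasOrthogonalProjection]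

theorem norm_starProjection_le_mul_norm_of_mem_orthogonal (hc : 0 ≤ c)
    (hEF : ∀ x ∈ E, ‖x - F.starProjection x‖ ≤ c * ‖x‖) {y : X} (hy : y ∈ Fᗮ) :
    ‖E.starProjection y‖ ≤ c * ‖y‖ := by
  set p := E.starProjection y
  have inner_eq : inner 𝕜 p y = inner 𝕜 (p - F.starProjection p) y := by
    rw [inner_sub_left, hy _ (F.starProjection_apply_mem p), sub_zero]
  have mul_self_le : ‖p‖ * ‖p‖ ≤ c * ‖y‖ * ‖p‖ := calc
    ‖p‖ * ‖p‖ = RCLike.re (inner 𝕜 p y) := by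
      rw [← sq]
      exact (E.re_inner_starProjection_eq_normSq y).symm
    _ = RCLike.re (inner 𝕜 (p - F.starProjection p) y) := by rw [inner_eq]
    _ ≤ ‖p - F.starProjection p‖ * ‖y‖ := re_inner_le_norm _ _
    _ ≤ c * ‖p‖ * ‖y‖ := by
      gcongr
      exact hEF p (E.starProjection_apply_mem y)
    _ = c * ‖y‖ * ‖p‖ := by ring
  rcases (norm_nonneg p).eq_or_lt with p_eq | p_pos
  · rw [← p_eq]
    positivity
  · exact le_of_mul_le_mul_right mul_self_le p_pos

theorem norm_starProjection_sub_starProjection_le (hc : 0 ≤ c)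
    (hEF : ∀ x ∈ E, ‖x - F.starProjection x‖ ≤ c * ‖x‖)
    (hFE : ∀ x ∈ F, ‖x - E.starProjection x‖ ≤ c * ‖x‖) :
    ‖E.starProjection - F.starProjection‖ ≤ c := by
  refine ContinuousLinearMap.opNorm_le_bound _ hc fun x ↦ ?_
  rw [sub_apply]
  set y := F.starProjection x
  have in_E : E.starProjection (E.starProjection x - y) = E.starProjection (x - y) := by
    simp only [map_sub, E.starProjection_eq_self_iff.2 (E.starProjection_apply_mem x)]
  have in_orthogonal : Eᗮ.starProjection (E.starProjection x - y) = -(y - E.starProjection y) := by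
    rw [E.starProjection_orthogonal_val, in_E, map_sub]
    abel
  refine le_of_sq_le_sq ?_ (by positivity)
  calc ‖E.starProjection x - y‖ ^ 2
      = ‖E.starProjection (x - y)‖ ^ 2 + ‖y - E.starProjection y‖ ^ 2 := by
        rw [E.norm_sq_eq_add_norm_sq_starProjection, in_E, in_orthogonal, norm_neg]
    _ ≤ (c * ‖x - y‖) ^ 2 + (c * ‖y‖) ^ 2 := by
        gcongr
        · exact norm_starProjection_le_mul_norm_of_mem_orthogonal hc hEF
            (F.sub_starProjection_mem_orthogonal x)
        · exact hFE y (F.starProjection_apply_mem x)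
    _ = (c * ‖x‖) ^ 2 := by
        rw [mul_pow c ‖x‖, F.norm_sq_eq_add_norm_sq_starProjection x,
          F.starProjection_orthogonal_val]
        ring

end Gap

section Idempotent

variable {𝕜 X : Type*} [RCLike 𝕜] [NormedAddCommGroup X] [InnerProductSpace 𝕜 X]
  {A B : X →L[𝕜] X} [A.range.HasOrthogonalProjection]

theorem norm_sub_starProjection_range_le (hB : IsIdempotentElem B) {x : X} (hx : x ∈ B.range) :
    ‖x - A.range.starProjection x‖ ≤ ‖A - B‖ * ‖x‖ := by
  have hBx : B x = x :=
    (LinearMap.IsIdempotentElem.mem_range_iff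
      (ContinuousLinearMap.IsIdempotentElem.toLinearMap hB)).1 hx
  calc ‖x - A.range.starProjection x‖
      ≤ ‖x - A x‖ := norm_sub_starProjection_le_norm_sub_of_mem x ⟨x, rfl⟩
    _ = ‖(A - B) x‖ := by rw [sub_apply, hBx, norm_sub_rev]
    _ ≤ ‖A - B‖ * ‖x‖ := (A - B).le_opNorm x

theorem norm_starProjection_range_sub_le [B.range.HasOrthogonalProjection]
    (hA : IsIdempotentElem A) (hB : IsIdempotentElem B) :
    ‖A.range.starProjection - B.range.starProjection‖ ≤ ‖A - B‖ :=
  norm_starProjection_sub_starProjection_le (norm_nonneg _)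
    (fun _ hx ↦ norm_sub_rev A B ▸ norm_sub_starProjection_range_le hA hx)
    (fun _ hx ↦ norm_sub_starProjection_range_le hB hx)

end Idempotent

theorem stmt0_general {ι 𝕜 X : Type*} [RCLike 𝕜] [NormedAddCommGroup X] [InnerProductSpace 𝕜 X]
    {l : Filter ι} {Q : ι → X →L[𝕜] X} {Q₀ : X →L[𝕜] X}
    [∀ i, (Q i).range.HasOrthogonalProjection] [Q₀.range.HasOrthogonalProjection]
    (hQ : ∀ i, IsIdempotentElem (Q i)) (hQ₀ : IsIdempotentElem Q₀)
    (hconv : Tendsto Q l (nhds Q₀)) :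
    Tendsto (fun i ↦ (Q i).range.starProjection) l (nhds Q₀.range.starProjection) :=
  tendsto_iff_norm_sub_tendsto_zero.2 <|
    squeeze_zero (fun _ ↦ norm_nonneg _) (fun i ↦ norm_starProjection_range_sub_le (hQ i) hQ₀)
      (tendsto_iff_norm_sub_tendsto_zero.1 hconv)

namespace IsOrthoProjOn

variable {X : Type*} [NormedAddCommGroup X] [InnerProductSpace ℝ X]
  {E : Submodule ℝ X} {P : X →L[ℝ] X}

theorem hasOrthogonalProjection (h : IsOrthoProjOn E P) : E.HasOrthogonalProjection :=
  ⟨fun x ↦ ⟨P x, h x⟩⟩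

theorem starProjection_eq [E.HasOrthogonalProjection] (h : IsOrthoProjOn E P) :
    E.starProjection = P :=
  ContinuousLinearMap.ext fun x ↦ Submodule.eq_starProjection_of_mem_orthogonal (h x).1 (h x).2

end IsOrthoProjOn

/-- If `Qₙ`, `Q` are bounded idempotent operators on a real Hilbert space with `Qₙ → Q`
in operator norm, then the orthogonal projections onto `range Qₙ` converge in operator
norm to the orthogonal projection onto `range Q`. -/
theorem stmt0 {X : Type*} [NormedAddCommGroup X] [InnerProductSpace ℝ X] [CompleteSpace X]
    (Q : ℕ → X →L[ℝ] X) (Q₀ : X →L[ℝ] X)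
    (hQn : ∀ n, (Q n).comp (Q n) = Q n) (hQ₀ : Q₀.comp Q₀ = Q₀)
    (hconv : Tendsto Q atTop (nhds Q₀))
    (P : ℕ → X →L[ℝ] X) (P₀ : X →L[ℝ] X)
    (hPn : ∀ n, IsOrthoProjOn (LinearMap.range (Q n : X →ₗ[ℝ] X)) (P n))
    (hP₀ : IsOrthoProjOn (LinearMap.range (Q₀ : X →ₗ[ℝ] X)) P₀) :
    Tendsto P atTop (nhds P₀) := by
  have (n : ℕ) := (hPn n).hasOrthogonalProjection
  have := hP₀.hasOrthogonalProjection
  exact hP₀.starProjection_eq ▸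
    (stmt0_general hQn hQ₀ hconv).congr fun n ↦ (hPn n).starProjection_eq
end

section
/- Let X be a real Hilbert space, (M,d) a metric space, and let {S(m)}_{m∈M} and {U(m)}_{m∈M} be continuous subbundles of closed subspaces of X over M. Assume there is a fixed natural number n such that dim U(m) = n < ∞ for all m ∈ M, and assume that for some m₀ ∈ M one has S(m₀) ∩ U(m₀) = {0} and S(m₀) + U(m₀) = X. Then there exists ε > 0 such that for every m ∈ M with d(m, m₀) < ε one has S(m) ∩ U(m) = {0} and S(m) + U(m) = X. -/
/-!
For idempotents `p`, `q` the element `w = q p + (1 - q) (1 - p)` satisfies `w p = q w`, and it is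
close to `1`, hence invertible, when `q` is close to `p`. So a continuous family of projections
moves its range by automorphisms that tend to `1` as `m → m₀`. If `X = S ⊕ U` at `m₀`, and `S`, `U`
are moved by `A m` and `B m`, glue the two into `T m = A m ∘ R + B m ∘ (1 - R)`, where `R` is the
projection onto `S` along `U`. Then `T m → 1` too, so `T m` is eventually an automorphism of the
whole space, and it carries the decomposition at `m₀` to the one at `m`.
-/

open Filter

open scoped Topology

section Intertwiner

variable {R : Type*} [Ring R]

/-- Kato's intertwiner of `p` and `q`: for idempotents it conjugates `p` into `q` as soon as it is
invertible. -/
def idempotentIntertwiner (p q : R) : R :=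
  q * p + (1 - q) * (1 - p)

theorem idempotentIntertwiner_self {p : R} (hp : IsIdempotentElem p) :
    idempotentIntertwiner p p = 1 := by
  rw [idempotentIntertwiner, hp.eq, hp.one_sub.eq, add_sub_cancel]

theorem idempotentIntertwiner_mul {p q : R} (hp : IsIdempotentElem p) (hq : IsIdempotentElem q) :
    idempotentIntertwiner p q * p = q * idempotentIntertwiner p q := by
  calc idempotentIntertwiner p q * p
      = q * (p * p) + (1 - q) * ((1 - p) * p) := by
        simp only [idempotentIntertwiner, add_mul, mul_assoc]
    _ = (q * q) * p + (q * (1 - q)) * (1 - p) := by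
        simp only [hp.eq, hq.eq, hp.one_sub_mul_self, hq.mul_one_sub_self, mul_zero, zero_mul]
    _ = q * idempotentIntertwiner p q := by
        simp only [idempotentIntertwiner, mul_add, mul_assoc]

theorem tendsto_idempotentIntertwiner [TopologicalSpace R] [IsTopologicalRing R]
    {ι : Type*} {l : Filter ι} {p : R} {q : ι → R} (hp : IsIdempotentElem p)
    (hq : Tendsto q l (𝓝 p)) :
    Tendsto (fun i => idempotentIntertwiner p (q i)) l (𝓝 1) := by
  rw [← idempotentIntertwiner_self hp]
  exact (hq.mul_const p).add ((hq.const_sub 1).mul_const (1 - p))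

end Intertwiner

theorem range_eq_map_range_of_comp_eq {R E F : Type*} [Semiring R]
    [AddCommMonoid E] [Module R E] [AddCommMonoid F] [Module R F]
    {p : E →ₗ[R] E} {q : F →ₗ[R] F} {w : E →ₗ[R] F} (hw : Function.Surjective w)
    (h : w ∘ₗ p = q ∘ₗ w) :
    LinearMap.range q = (LinearMap.range p).map w := by
  rw [← LinearMap.range_comp, h,
    LinearMap.range_comp_of_range_eq_top q (LinearMap.range_eq_top.mpr hw)]

section Banach

variable {𝕜 E : Type*} [NontriviallyNormedField 𝕜] [NormedAddCommGroup E] [NormedSpace 𝕜 E]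
  [CompleteSpace E] {ι : Type*} {l : Filter ι}

theorem eventually_bijective_of_tendsto_one {T : ι → E →L[𝕜] E} (hT : Tendsto T l (𝓝 1)) :
    ∀ᶠ i in l, Function.Bijective (T i) :=
  (hT.eventually (Units.nhds 1)).mono fun _ => ContinuousLinearMap.isUnit_iff_bijective.mp

theorem eventually_range_eq_map_idempotentIntertwiner {p : E →L[𝕜] E} {q : ι → E →L[𝕜] E}
    (hp : IsIdempotentElem p) (hq : ∀ i, IsIdempotentElem (q i)) (hlim : Tendsto q l (𝓝 p)) :
    ∀ᶠ i in l, LinearMap.range (q i : E →ₗ[𝕜] E) =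
      (LinearMap.range (p : E →ₗ[𝕜] E)).map (idempotentIntertwiner p (q i) : E →ₗ[𝕜] E) := by
  filter_upwards [eventually_bijective_of_tendsto_one (tendsto_idempotentIntertwiner hp hlim)]
    with i hi
  exact range_eq_map_range_of_comp_eq hi.surjective
    (congrArg ContinuousLinearMap.toLinearMap (idempotentIntertwiner_mul hp (hq i)))

theorem eventually_isCompl_map {S U : Submodule 𝕜 E} (h : S.IsTopCompl U)
    {A B : ι → E →L[𝕜] E} (hA : Tendsto A l (𝓝 1)) (hB : Tendsto B l (𝓝 1)) :
    ∀ᶠ i in l, IsCompl (S.map (A i : E →ₗ[𝕜] E)) (U.map (B i : E →ₗ[𝕜] E)) := by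
  let R : E →L[𝕜] E := S.projectionL U h
  let T : ι → E →L[𝕜] E := fun i => A i * R + B i * (1 - R)
  have hT : Tendsto T l (𝓝 1) := by
    simpa only [one_mul, add_sub_cancel] using (hA.mul_const R).add (hB.mul_const (1 - R))
  have hTS (i : ι) (x : E) (hx : x ∈ S) : T i x = A i x := by
    have hR : R x = x := Submodule.projectionL_apply_left h ⟨x, hx⟩
    simp [T, hR]
  have hTU (i : ι) (x : E) (hx : x ∈ U) : T i x = B i x := by
    have hR : R x = 0 := Submodule.projectionL_apply_right h ⟨x, hx⟩
    simp [T, hR]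
  filter_upwards [eventually_bijective_of_tendsto_one hT] with i hi
  have hmapS : S.map (T i : E →ₗ[𝕜] E) = S.map (A i : E →ₗ[𝕜] E) :=
    SetLike.coe_injective (Set.image_congr (hTS i))
  have hmapU : U.map (T i : E →ₗ[𝕜] E) = U.map (B i : E →ₗ[𝕜] E) :=
    SetLike.coe_injective (Set.image_congr (hTU i))
  rw [← hmapS, ← hmapU]
  exact (Submodule.orderIsoMapComapOfBijective (T i : E →ₗ[𝕜] E) hi).isCompl h.isCompl

theorem stmt1_general {M : Type*} [TopologicalSpace M] {P Q : M → E →L[𝕜] E} {m₀ : M}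
    (hPcont : ContinuousAt P m₀) (hQcont : ContinuousAt Q m₀)
    (hP : ∀ m, IsIdempotentElem (P m)) (hQ : ∀ m, IsIdempotentElem (Q m))
    (h₀ : IsCompl (LinearMap.range (P m₀ : E →ₗ[𝕜] E)) (LinearMap.range (Q m₀ : E →ₗ[𝕜] E))) :
    ∀ᶠ m in 𝓝 m₀,
      IsCompl (LinearMap.range (P m : E →ₗ[𝕜] E)) (LinearMap.range (Q m : E →ₗ[𝕜] E)) := by
  have htop := Submodule.IsCompl.isTopCompl_of_isClosed h₀
    (ContinuousLinearMap.IsIdempotentElem.isClosed_range (hP m₀))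
    (ContinuousLinearMap.IsIdempotentElem.isClosed_range (hQ m₀))
  filter_upwards [eventually_range_eq_map_idempotentIntertwiner (hP m₀) hP hPcont,
    eventually_range_eq_map_idempotentIntertwiner (hQ m₀) hQ hQcont,
    eventually_isCompl_map htop (tendsto_idempotentIntertwiner (hP m₀) hPcont)
      (tendsto_idempotentIntertwiner (hQ m₀) hQcont)] with m hPm hQm hm
  rwa [hPm, hQm]

end Banach

/-- Small perturbations of a direct sum decomposition are still direct sums:
if `S`, `U` are continuous subbundles of closed subspaces of a real Hilbert space `X`
over a metric space `M`, `U(m)` has constant finite dimension `n`, and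
`S(m₀) ⊕ U(m₀) = X`, then `S(m) ⊕ U(m) = X` for all `m` near `m₀`. -/
theorem stmt1 {X : Type*} [NormedAddCommGroup X] [InnerProductSpace ℝ X] [CompleteSpace X]
    {M : Type*} [MetricSpace M]
    (S U : M → Submodule ℝ X)
    (PS PU : M → X →L[ℝ] X)
    (hPScont : Continuous PS) (hPUcont : Continuous PU)
    (hPSidem : ∀ m, (PS m).comp (PS m) = PS m)
    (hPUidem : ∀ m, (PU m).comp (PU m) = PU m)
    (hPSrange : ∀ m, LinearMap.range (PS m : X →ₗ[ℝ] X) = S m)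
    (hPUrange : ∀ m, LinearMap.range (PU m : X →ₗ[ℝ] X) = U m)
    (n : ℕ) (hfin : ∀ m, FiniteDimensional ℝ (U m))
    (hdim : ∀ m, Module.finrank ℝ (U m) = n)
    (m₀ : M) (hinf₀ : S m₀ ⊓ U m₀ = ⊥) (hsup₀ : S m₀ ⊔ U m₀ = ⊤) :
    ∃ ε > 0, ∀ m, dist m m₀ < ε → S m ⊓ U m = ⊥ ∧ S m ⊔ U m = ⊤ := by
  simp only [← hPSrange, ← hPUrange, ← disjoint_iff, ← codisjoint_iff, ← isCompl_iff]
    at hinf₀ hsup₀ ⊢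
  exact Metric.eventually_nhds_iff.mp <| stmt1_general hPScont.continuousAt hPUcont.continuousAt
    hPSidem hPUidem ⟨hinf₀, hsup₀⟩
end

section
/- Let X be a real Hilbert space, let Q_n (n ∈ ℕ) and Q be bounded idempotent operators on X, and let T_n and T be bounded-below bounded operators on X (isomorphisms onto their ranges), with Q_n → Q and T_n → T in the operator norm. Assume range(Q_n) ⊆ range(T_n) for all n and range(Q) ⊆ range(T). Let R_n and R be the unique bounded operators on X satisfying T_n ∘ R_n = Q_n and T ∘ R = Q (they exist and are unique since T_n, T are injective with ranges containing the relevant ranges). Then R_n → R in the operator norm; moreover the subspaces range(R_n) and range(R) are closed, and the orthogonal projection onto range(R_n) converges in the operator norm to the orthogonal projection onto range(R). -/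
open Filter

/-!
Operators near a bounded-below one are uniformly bounded below, so `Rₙ - R` is
controlled by `Tₙ ∘ (Rₙ - R) = Qₙ - Tₙ ∘ R → 0`. Cancelling the injective `Tₙ` in
`Tₙ Rₙ Tₙ Rₙ = Tₙ Rₙ` shows that `Rₙ ∘ Tₙ` is an oblique projection onto `range Rₙ`. These oblique
projections converge, and orthogonal projections are at most as far apart as any oblique
projections onto the same subspaces.
-/

open scoped Topology

section ObliqueProjection

variable {A M N : Type*} [Semiring A] [AddCommMonoid M] [Module A M] [TopologicalSpace M]
  [AddCommMonoid N] [Module A N] [TopologicalSpace N]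

theorem isProj_range_comp_of_isIdempotentElem_comp {T : M →L[A] N} {R : N →L[A] M}
    (hTR : IsIdempotentElem (T.comp R)) (hT : Function.Injective T) :
    LinearMap.IsProj (LinearMap.range (R : N →ₗ[A] M)) (R.comp T) where
  map_mem x := ⟨T x, rfl⟩
  map_id := by
    rintro _ ⟨y, rfl⟩
    exact hT (DFunLike.congr_fun hTR y)

theorem isClosed_of_isProj [T2Space M] {p : Submodule A M} {S : M →L[A] M}
    (hS : LinearMap.IsProj p S) : IsClosed (p : Set M) := by
  have hp : (p : Set M) = {x | S x = x} :=
    Set.ext fun x => ⟨hS.map_id x, fun hx => hx ▸ hS.map_mem x⟩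
  rw [hp]
  exact isClosed_eq S.continuous continuous_id

end ObliqueProjection

section BoundedBelow

variable {𝕜 E F G : Type*} [NontriviallyNormedField 𝕜] [NormedAddCommGroup E] [NormedSpace 𝕜 E]
  [NormedAddCommGroup F] [NormedSpace 𝕜 F] [NormedAddCommGroup G] [NormedSpace 𝕜 G]

theorem tendsto_clm_comp {ι : Type*} {l : Filter ι} {T : ι → F →L[𝕜] G} {T₀ : F →L[𝕜] G}
    {R : ι → E →L[𝕜] F} {R₀ : E →L[𝕜] F} (hT : Tendsto T l (𝓝 T₀)) (hR : Tendsto R l (𝓝 R₀)) :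
    Tendsto (fun i => (T i).comp (R i)) l (𝓝 (T₀.comp R₀)) :=
  (continuous_fst.clm_comp continuous_snd).continuousAt.tendsto.comp (hT.prodMk_nhds hR)

theorem eventually_nhds_mul_norm_le_norm_apply {T₀ : F →L[𝕜] G} {c c' : ℝ}
    (hT₀ : ∀ x, c * ‖x‖ ≤ ‖T₀ x‖) (hc : c' < c) :
    ∀ᶠ T : F →L[𝕜] G in 𝓝 T₀, ∀ x, c' * ‖x‖ ≤ ‖T x‖ := by
  filter_upwards [eventually_norm_sub_lt T₀ (sub_pos.2 hc)] with T hT x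
  have hdiff : ‖T₀ x - T x‖ ≤ (c - c') * ‖x‖ := by
    rw [norm_sub_rev]
    exact (T - T₀).le_of_opNorm_le hT.le x
  linarith [hT₀ x, norm_sub_norm_le (T₀ x) (T x)]

theorem mul_norm_le_norm_comp {T : F →L[𝕜] G} {c : ℝ} (hc : 0 < c)
    (hT : ∀ x, c * ‖x‖ ≤ ‖T x‖) (S : E →L[𝕜] F) : c * ‖S‖ ≤ ‖T.comp S‖ := by
  rw [← le_div_iff₀' hc]
  refine S.opNorm_le_bound (by positivity) fun x => ?_
  rw [div_mul_eq_mul_div, le_div_iff₀' hc]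
  exact (hT (S x)).trans ((T.comp S).le_opNorm x)

theorem injective_of_mul_norm_le {T : F →L[𝕜] G} (hT : ∃ c > 0, ∀ x, c * ‖x‖ ≤ ‖T x‖) :
    Function.Injective T :=
  let ⟨_, hK⟩ := antilipschitzWith_iff_exists_mul_le_norm.2 hT
  hK.injective

theorem tendsto_of_tendsto_comp {ι : Type*} {l : Filter ι} {T : ι → F →L[𝕜] G} {T₀ : F →L[𝕜] G}
    {R : ι → E →L[𝕜] F} {R₀ : E →L[𝕜] F} (hT₀ : ∃ c > 0, ∀ x, c * ‖x‖ ≤ ‖T₀ x‖)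
    (hT : Tendsto T l (𝓝 T₀))
    (hTR : Tendsto (fun i => (T i).comp (R i)) l (𝓝 (T₀.comp R₀))) : Tendsto R l (𝓝 R₀) := by
  obtain ⟨c, hc, hT₀⟩ := hT₀
  obtain ⟨c', hc', hlt⟩ := exists_between hc
  have hcomp : Tendsto (fun i => (T i).comp (R i - R₀)) l (𝓝 0) := by
    simpa only [ContinuousLinearMap.comp_sub, sub_self] using
      hTR.sub (tendsto_clm_comp hT (tendsto_const_nhds (x := R₀)))
  have hbound : ∀ᶠ i in l, ‖R i - R₀‖ ≤ ‖(T i).comp (R i - R₀)‖ / c' :=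
    (hT.eventually (eventually_nhds_mul_norm_le_norm_apply hT₀ hlt)).mono
      fun i hi => (le_div_iff₀' hc').2 (mul_norm_le_norm_comp hc' hi _)
  rw [tendsto_iff_norm_sub_tendsto_zero]
  refine squeeze_zero' (.of_forall fun _ => norm_nonneg _) hbound ?_
  simpa only [norm_zero, zero_div] using hcomp.norm.div_const c'

end BoundedBelow

section OrthogonalProjection

variable {𝕜 X : Type*} [RCLike 𝕜] [NormedAddCommGroup X] [InnerProductSpace 𝕜 X]
  {E F : Submodule 𝕜 X}

theorem exists_starProjection_eq {P : X →L[𝕜] X} (hP : ∀ x, P x ∈ E ∧ x - P x ∈ Eᗮ) :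
    ∃ _ : E.HasOrthogonalProjection, E.starProjection = P :=
  have : E.HasOrthogonalProjection := ⟨fun x => ⟨P x, hP x⟩⟩
  ⟨this, ContinuousLinearMap.ext fun x =>
    Submodule.eq_starProjection_of_mem_orthogonal (hP x).1 (hP x).2⟩

theorem norm_sub_starProjection_le_norm_sub [F.HasOrthogonalProjection] (x : X) {y : X}
    (hy : y ∈ F) : ‖x - F.starProjection x‖ ≤ ‖x - y‖ := by
  rw [Submodule.starProjection_minimal]
  exact ciInf_le ⟨0, Set.forall_mem_range.2 fun _ => norm_nonneg _⟩ (⟨y, hy⟩ : F)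

theorem norm_starProjection_le_of_mem_orthogonal [E.HasOrthogonalProjection]
    [F.HasOrthogonalProjection] {d : ℝ} (hd : 0 ≤ d)
    (hFE : ∀ v ∈ F, ‖v - E.starProjection v‖ ≤ d * ‖v‖) {y : X} (hy : y ∈ Eᗮ) :
    ‖F.starProjection y‖ ≤ d * ‖y‖ := by
  set v := F.starProjection y
  have hv : v ∈ F := F.starProjection_apply_mem y
  rcases (norm_nonneg v).eq_or_lt with hv₀ | hv₀
  · rw [← hv₀]
    positivity
  have hvEy : inner 𝕜 (E.starProjection v) y = 0 :=
    E.inner_right_of_mem_orthogonal (E.starProjection_apply_mem v) hy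
  have hvy : inner 𝕜 v y = inner 𝕜 v v := by
    rw [← sub_eq_zero, ← inner_sub_right]
    exact F.inner_right_of_mem_orthogonal hv (F.sub_starProjection_mem_orthogonal y)
  refine le_of_mul_le_mul_right ?_ hv₀
  calc ‖v‖ * ‖v‖ = RCLike.re (inner 𝕜 v v) := (inner_self_eq_norm_mul_norm v).symm
    _ = RCLike.re (inner 𝕜 (v - E.starProjection v) y) := by
        rw [inner_sub_left, hvEy, sub_zero, hvy]
    _ ≤ ‖v - E.starProjection v‖ * ‖y‖ := re_inner_le_norm _ _
    _ ≤ d * ‖v‖ * ‖y‖ := by gcongr; exact hFE v hv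
    _ = d * ‖y‖ * ‖v‖ := mul_right_comm _ _ _

theorem norm_starProjection_sub_starProjection_le_s5 [E.HasOrthogonalProjection]
    [F.HasOrthogonalProjection] {d : ℝ} (hd : 0 ≤ d)
    (hEF : ∀ u ∈ E, ‖u - F.starProjection u‖ ≤ d * ‖u‖)
    (hFE : ∀ v ∈ F, ‖v - E.starProjection v‖ ≤ d * ‖v‖) :
    ‖E.starProjection - F.starProjection‖ ≤ d := by
  refine ContinuousLinearMap.opNorm_le_bound _ hd fun x => ?_
  set u := E.starProjection x
  set w := Eᗮ.starProjection x
  have hx : u + w = x := E.starProjection_add_starProjection_orthogonal x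
  have hu : ‖u - F.starProjection u‖ ≤ d * ‖u‖ := hEF u (E.starProjection_apply_mem x)
  have hw : ‖F.starProjection w‖ ≤ d * ‖w‖ :=
    norm_starProjection_le_of_mem_orthogonal hd hFE (Eᗮ.starProjection_apply_mem x)
  have hsplit : (E.starProjection - F.starProjection) x
      = (u - F.starProjection u) - F.starProjection w := by
    rw [sub_sub, ← map_add, hx, sub_apply]
  have horth : inner 𝕜 (u - F.starProjection u) (F.starProjection w) = 0 :=
    F.starProjection_inner_eq_zero u _ (F.starProjection_apply_mem w)
  refine le_of_sq_le_sq ?_ (by positivity)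
  calc ‖(E.starProjection - F.starProjection) x‖ ^ 2
      = ‖u - F.starProjection u‖ ^ 2 + ‖F.starProjection w‖ ^ 2 := by
        rw [hsplit, norm_sub_sq (𝕜 := 𝕜), horth, map_zero, mul_zero, sub_zero]
    _ ≤ (d * ‖u‖) ^ 2 + (d * ‖w‖) ^ 2 := by gcongr
    _ = (d * ‖x‖) ^ 2 := by
        rw [mul_pow, mul_pow, mul_pow, ← mul_add, ← E.norm_sq_eq_add_norm_sq_starProjection x]

theorem norm_starProjection_sub_starProjection_le_of_isProj [E.HasOrthogonalProjection]
    [F.HasOrthogonalProjection] {S S' : X →L[𝕜] X} (hS : LinearMap.IsProj E S)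
    (hS' : LinearMap.IsProj F S') :
    ‖E.starProjection - F.starProjection‖ ≤ ‖S - S'‖ := by
  refine norm_starProjection_sub_starProjection_le_s5 (norm_nonneg _) (fun u hu => ?_) fun v hv => ?_
  · calc ‖u - F.starProjection u‖ ≤ ‖u - S' u‖ :=
          norm_sub_starProjection_le_norm_sub u (hS'.map_mem u)
      _ = ‖(S - S') u‖ := by rw [sub_apply, hS.map_id u hu]
      _ ≤ ‖S - S'‖ * ‖u‖ := (S - S').le_opNorm u
  · calc ‖v - E.starProjection v‖ ≤ ‖v - S v‖ :=
          norm_sub_starProjection_le_norm_sub v (hS.map_mem v)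
      _ = ‖(S' - S) v‖ := by rw [sub_apply, hS'.map_id v hv]
      _ ≤ ‖S - S'‖ * ‖v‖ := norm_sub_rev S S' ▸ (S' - S).le_opNorm v

theorem tendsto_starProjection_of_isProj {ι : Type*} {l : Filter ι} {E : ι → Submodule 𝕜 X}
    {E₀ : Submodule 𝕜 X} [∀ i, (E i).HasOrthogonalProjection] [E₀.HasOrthogonalProjection]
    {S : ι → X →L[𝕜] X} {S₀ : X →L[𝕜] X} (hS : ∀ i, LinearMap.IsProj (E i) (S i))
    (hS₀ : LinearMap.IsProj E₀ S₀) (hlim : Tendsto S l (𝓝 S₀)) :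
    Tendsto (fun i => (E i).starProjection) l (𝓝 E₀.starProjection) := by
  rw [tendsto_iff_norm_sub_tendsto_zero] at hlim ⊢
  exact squeeze_zero (fun _ => norm_nonneg _)
    (fun i => norm_starProjection_sub_starProjection_le_of_isProj (hS i) hS₀) hlim

end OrthogonalProjection

theorem stmt5_general {𝕜 X Y ι : Type*} [RCLike 𝕜] [NormedAddCommGroup X] [InnerProductSpace 𝕜 X]
    [NormedAddCommGroup Y] [NormedSpace 𝕜 Y] {l : Filter ι}
    {Q : ι → Y →L[𝕜] Y} {T : ι → X →L[𝕜] Y} {R : ι → Y →L[𝕜] X}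
    {Q₀ : Y →L[𝕜] Y} {T₀ : X →L[𝕜] Y} {R₀ : Y →L[𝕜] X}
    (hQ : ∀ i, IsIdempotentElem (Q i)) (hQ₀ : IsIdempotentElem Q₀)
    (hT : ∀ i, Function.Injective (T i)) (hT₀ : ∃ c > 0, ∀ x, c * ‖x‖ ≤ ‖T₀ x‖)
    (hQlim : Tendsto Q l (𝓝 Q₀)) (hTlim : Tendsto T l (𝓝 T₀))
    (hTR : ∀ i, (T i).comp (R i) = Q i) (hTR₀ : T₀.comp R₀ = Q₀) :
    Tendsto R l (𝓝 R₀) ∧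
    (∀ i, IsClosed (LinearMap.range (R i : Y →ₗ[𝕜] X) : Set X)) ∧
    IsClosed (LinearMap.range (R₀ : Y →ₗ[𝕜] X) : Set X) ∧
    ∀ (P : ι → X →L[𝕜] X) (P₀ : X →L[𝕜] X),
      (∀ i x, P i x ∈ LinearMap.range (R i : Y →ₗ[𝕜] X) ∧
        x - P i x ∈ (LinearMap.range (R i : Y →ₗ[𝕜] X))ᗮ) →
      (∀ x, P₀ x ∈ LinearMap.range (R₀ : Y →ₗ[𝕜] X) ∧
        x - P₀ x ∈ (LinearMap.range (R₀ : Y →ₗ[𝕜] X))ᗮ) →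
      Tendsto P l (𝓝 P₀) := by
  obtain rfl : (fun i => (T i).comp (R i)) = Q := funext hTR
  subst hTR₀
  have hRlim : Tendsto R l (𝓝 R₀) := tendsto_of_tendsto_comp hT₀ hTlim hQlim
  have hproj i := isProj_range_comp_of_isIdempotentElem_comp (hQ i) (hT i)
  have hproj₀ := isProj_range_comp_of_isIdempotentElem_comp hQ₀ (injective_of_mul_norm_le hT₀)
  refine ⟨hRlim, fun i => isClosed_of_isProj (hproj i), isClosed_of_isProj hproj₀,
    fun P P₀ hP hP₀ => ?_⟩
  choose _ hP_eq using fun i => exists_starProjection_eq (hP i)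
  obtain ⟨_, rfl⟩ := exists_starProjection_eq hP₀
  obtain rfl := funext hP_eq
  exact tendsto_starProjection_of_isProj hproj hproj₀ (tendsto_clm_comp hRlim hTlim)

/-- If `Qₙ → Q` (idempotents) and `Tₙ → T` (bounded below) in operator norm, with
`range Qₙ ⊆ range Tₙ` and `range Q ⊆ range T`, and `Rₙ`, `R` are the unique bounded
operators with `Tₙ ∘ Rₙ = Qₙ` and `T ∘ R = Q`, then `Rₙ → R` in operator norm,
the ranges of `Rₙ` and `R` are closed, and the orthogonal projections onto
`range Rₙ` converge in operator norm to the orthogonal projection onto `range R`. -/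
theorem stmt5 {X : Type*} [NormedAddCommGroup X] [InnerProductSpace ℝ X] [CompleteSpace X]
    (Q T R : ℕ → X →L[ℝ] X) (Q₀ T₀ R₀ : X →L[ℝ] X)
    (hQn : ∀ n, (Q n).comp (Q n) = Q n) (hQ₀ : Q₀.comp Q₀ = Q₀)
    (hTn : ∀ n, ∃ c > 0, ∀ x : X, c * ‖x‖ ≤ ‖T n x‖)
    (hT₀ : ∃ c > 0, ∀ x : X, c * ‖x‖ ≤ ‖T₀ x‖)
    (hQconv : Tendsto Q atTop (nhds Q₀)) (hTconv : Tendsto T atTop (nhds T₀))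
    (hrangen : ∀ n, LinearMap.range (Q n : X →ₗ[ℝ] X) ≤ LinearMap.range (T n : X →ₗ[ℝ] X))
    (hrange₀ : LinearMap.range (Q₀ : X →ₗ[ℝ] X) ≤ LinearMap.range (T₀ : X →ₗ[ℝ] X))
    (hRn : ∀ n, (T n).comp (R n) = Q n) (hR₀ : T₀.comp R₀ = Q₀) :
    Tendsto R atTop (nhds R₀) ∧
    (∀ n, IsClosed ((LinearMap.range (R n : X →ₗ[ℝ] X) : Submodule ℝ X) : Set X)) ∧
    IsClosed ((LinearMap.range (R₀ : X →ₗ[ℝ] X) : Submodule ℝ X) : Set X) ∧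
    ∀ (P : ℕ → X →L[ℝ] X) (P₀ : X →L[ℝ] X),
      (∀ n, IsOrthoProjOn (LinearMap.range (R n : X →ₗ[ℝ] X)) (P n)) →
      IsOrthoProjOn (LinearMap.range (R₀ : X →ₗ[ℝ] X)) P₀ →
      Tendsto P atTop (nhds P₀) := by
  exact stmt5_general hQn hQ₀ (fun n => injective_of_mul_norm_le (hTn n)) hT₀ hQconv hTconv hRn hR₀
end

section
/- Let (M,d) be a metric space, X a real Hilbert space, and let {E_m}_{m∈M} and {F_m}_{m∈M} be continuous subbundles of closed subspaces of X over M. Assume that for every m ∈ M one has E_m + F_m = X and that the orthogonal complement E_m^⊥ is finite dimensional. Then the family {E_m ∩ F_m}_{m∈M} is an orthogonally continuous subbundle, i.e. the map sending m to the orthogonal projection of X onto the closed subspace E_m ∩ F_m is continuous in the operator norm. -/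
open Filter

/-!
Let `A`, `B` be continuous families of projections onto `E`, `F`. At a point where `E + F = X` there
are operators `S`, `T` with `A S + B T = 1`, because a surjection from a Hilbert space onto a Banach
space splits. Since invertibility is an open condition, `S` and `T` can be continued to nearby
points, and wherever `A S + B T = 1` the operator `A - A S (A - B) = B + B T (A - B)` is a
projection onto `E ∩ F`. Finally, replacing arbitrary projections by the orthogonal ones with the
same ranges does not increase the norm of their difference.
-/

open Topology

section Projections

variable {R X : Type*} [Ring R] [AddCommGroup X] [Module R X] [TopologicalSpace X]

lemma isProj_of_isIdempotentElem_of_range_eq {U : Submodule R X} {p : X →L[R] X}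
    (hp : IsIdempotentElem p) (hU : p.range = U) : LinearMap.IsProj U p := by
  subst hU
  have hproj := LinearMap.IsIdempotentElem.isProj_range _
    (ContinuousLinearMap.IsIdempotentElem.toLinearMap hp)
  exact ⟨hproj.map_mem, hproj.map_id⟩

lemma isProj_inf_of_mul_add_mul_eq_one [IsTopologicalAddGroup X] {U V : Submodule R X}
    {p q s t : X →L[R] X} (hp : LinearMap.IsProj U p) (hq : LinearMap.IsProj V q)
    (h : p * s + q * t = 1) : LinearMap.IsProj (U ⊓ V) (p - p * s * (p - q)) where
  map_mem x := by
    have hsymm : p - p * s * (p - q) = q + q * t * (p - q) := by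
      rw [eq_sub_of_add_eq h]
      noncomm_ring
    refine ⟨U.sub_mem (hp.map_mem _) (hp.map_mem _), ?_⟩
    rw [hsymm]
    exact V.add_mem (hq.map_mem _) (hq.map_mem _)
  map_id x hx := by simp [hp.map_id x hx.1, hq.map_id x hx.2]

end Projections

section Splitting

lemma hasRightInverse_of_surjective_of_closedComplemented_ker {𝕜 X Y : Type*}
    [NontriviallyNormedField 𝕜] [NormedAddCommGroup X] [NormedSpace 𝕜 X] [CompleteSpace X]
    [NormedAddCommGroup Y] [NormedSpace 𝕜 Y] [CompleteSpace Y] {f : X →L[𝕜] Y}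
    (hf : Function.Surjective f) (hker : f.ker.ClosedComplemented) : f.HasRightInverse := by
  obtain ⟨C, hC_closed, hC⟩ := hker.exists_isClosed_isCompl
  have : CompleteSpace C := hC_closed.completeSpace_coe
  have hinj : (f ∘L C.subtypeL).ker = ⊥ :=
    (LinearMap.ker_domRestrict C f.toLinearMap).trans
      (Submodule.disjoint_iff_comap_eq_bot.1 hC.disjoint.symm)
  have hsurj : (f ∘L C.subtypeL).range = ⊤ := by
    rw [ContinuousLinearMap.toLinearMap_comp, LinearMap.range_comp, Submodule.toLinearMap_subtypeL,
      Submodule.range_subtype, LinearMap.map_eq_top_iff (LinearMap.range_eq_top.2 hf)]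
    exact hC.symm.sup_eq_top
  let e := ContinuousLinearEquiv.ofBijective (f ∘L C.subtypeL) hinj hsurj
  exact ⟨C.subtypeL ∘L e.symm, e.apply_symm_apply⟩

variable {𝕜 X₁ X₂ Y : Type*} [RCLike 𝕜]
  [NormedAddCommGroup X₁] [InnerProductSpace 𝕜 X₁] [CompleteSpace X₁]
  [NormedAddCommGroup X₂] [InnerProductSpace 𝕜 X₂] [CompleteSpace X₂]
  [NormedAddCommGroup Y] [NormedSpace 𝕜 Y] [CompleteSpace Y]

lemma hasRightInverse_of_surjective {f : X₁ →L[𝕜] Y} (hf : Function.Surjective f) :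
    f.HasRightInverse :=
  hasRightInverse_of_surjective_of_closedComplemented_ker hf
    f.ker.isTopCompl_orthogonal.closedComplemented

lemma hasRightInverse_coprod_of_range_sup_range_eq_top {f : X₁ →L[𝕜] Y} {g : X₂ →L[𝕜] Y}
    (h : f.range ⊔ g.range = ⊤) : (f.coprod g).HasRightInverse := by
  have hsurj : Function.Surjective (f.coprod g) :=
    LinearMap.range_eq_top.1 ((f.range_coprod g).trans h)
  let e := WithLp.prodContinuousLinearEquiv 2 𝕜 X₁ X₂
  exact (hasRightInverse_of_surjective (f := (f.coprod g) ∘L e.toContinuousLinearMap)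
    (hsurj.comp e.surjective)).of_comp

end Splitting

lemma exists_continuousAt_isProj_inf {𝕜 X M : Type*} [NontriviallyNormedField 𝕜]
    [NormedAddCommGroup X] [NormedSpace 𝕜 X] [CompleteSpace X] [TopologicalSpace M]
    {E F : M → Submodule 𝕜 X} {A B : M → X →L[𝕜] X} {m₀ : M}
    (hA : ContinuousAt A m₀) (hB : ContinuousAt B m₀)
    (hAE : ∀ m, LinearMap.IsProj (E m) (A m)) (hBF : ∀ m, LinearMap.IsProj (F m) (B m))
    (hsplit : ((A m₀).coprod (B m₀)).HasRightInverse) :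
    ∃ K : M → X →L[𝕜] X, ContinuousAt K m₀ ∧
      ∀ᶠ m in 𝓝 m₀, LinearMap.IsProj (E m ⊓ F m) (K m) := by
  obtain ⟨r, hr⟩ := hsplit
  let s : X →L[𝕜] X := .fst 𝕜 X X ∘L r
  let t : X →L[𝕜] X := .snd 𝕜 X X ∘L r
  let D m := A m * s + B m * t
  have hD : ContinuousAt D m₀ := by fun_prop
  have hD_one : D m₀ = 1 := ContinuousLinearMap.ext hr
  have hD_unit : ∀ᶠ m in 𝓝 m₀, IsUnit (D m) :=
    hD.eventually_mem (Units.isOpen.mem_nhds (hD_one ▸ isUnit_one))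
  have hinv : ContinuousAt (fun m ↦ Ring.inverse (D m)) m₀ :=
    (NormedRing.inverse_continuousAt 1).comp_of_eq hD hD_one
  refine ⟨fun m ↦ A m - A m * (s * Ring.inverse (D m)) * (A m - B m), by fun_prop, ?_⟩
  filter_upwards [hD_unit] with m hm
  refine isProj_inf_of_mul_add_mul_eq_one (t := t * Ring.inverse (D m)) (hAE m) (hBF m) ?_
  calc A m * (s * Ring.inverse (D m)) + B m * (t * Ring.inverse (D m))
      = D m * Ring.inverse (D m) := by simp only [D, add_mul, mul_assoc]
    _ = 1 := Ring.mul_inverse_cancel _ hm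

section OrthogonalProjections

variable {𝕜 X : Type*} [RCLike 𝕜] [NormedAddCommGroup X] [InnerProductSpace 𝕜 X]
  {V W : Submodule 𝕜 X}

lemma norm_sub_starProjection_le [V.HasOrthogonalProjection] {v : X} (hv : v ∈ V) (x : X) :
    ‖x - V.starProjection x‖ ≤ ‖x - v‖ := by
  rw [V.starProjection_minimal x]
  exact ciInf_le ⟨0, Set.forall_mem_range.2 fun _ ↦ norm_nonneg _⟩ (⟨v, hv⟩ : V)

lemma norm_sub_starProjection_le_norm_sub_mul_of_mem [V.HasOrthogonalProjection]
    {K L : X →L[𝕜] X} (hK : LinearMap.IsProj V K) (hL : LinearMap.IsProj W L) {w : X} (hw : w ∈ W) :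
    ‖w - V.starProjection w‖ ≤ ‖K - L‖ * ‖w‖ :=
  calc ‖w - V.starProjection w‖ ≤ ‖w - K w‖ := norm_sub_starProjection_le (hK.map_mem w) w
    _ = ‖(K - L) w‖ := by rw [sub_apply, hL.map_id w hw, norm_sub_rev]
    _ ≤ ‖K - L‖ * ‖w‖ := (K - L).le_opNorm w

lemma norm_starProjection_le_norm_sub_mul_of_mem_orthogonal [V.HasOrthogonalProjection]
    [W.HasOrthogonalProjection] {K L : X →L[𝕜] X} (hK : LinearMap.IsProj V K)
    (hL : LinearMap.IsProj W L) {y : X} (hy : y ∈ Wᗮ) : ‖V.starProjection y‖ ≤ ‖K - L‖ * ‖y‖ := by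
  set v := V.starProjection y
  have hv : v ∈ V := V.starProjection_apply_mem y
  have hvy : ‖v‖ * ‖v‖ ≤ ‖v‖ * (‖K - L‖ * ‖y‖) := by
    calc
      ‖v‖ * ‖v‖ = ‖inner 𝕜 v v‖ := by rw [← inner_self_re_eq_norm, inner_self_eq_norm_mul_norm]
      _ = ‖inner 𝕜 (v - W.starProjection v) y‖ := by
        rw [inner_sub_left, hy _ (W.starProjection_apply_mem v), sub_zero,
          ← V.inner_starProjection_left_eq_right, V.starProjection_eq_self_iff.2 hv]
      _ ≤ ‖v - W.starProjection v‖ * ‖y‖ := norm_inner_le_norm _ _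
      _ ≤ ‖L - K‖ * ‖v‖ * ‖y‖ := by
        gcongr
        exact norm_sub_starProjection_le_norm_sub_mul_of_mem hL hK hv
      _ = ‖v‖ * (‖K - L‖ * ‖y‖) := by
        rw [norm_sub_rev]
        ring
  rcases (norm_nonneg v).eq_or_lt with hv_zero | hv_pos
  · rw [← hv_zero]
    positivity
  · exact le_of_mul_le_mul_left hvy hv_pos

lemma norm_starProjection_sub_starProjection_le_s7 [V.HasOrthogonalProjection]
    [W.HasOrthogonalProjection] {K L : X →L[𝕜] X} (hK : LinearMap.IsProj V K)
    (hL : LinearMap.IsProj W L) : ‖V.starProjection - W.starProjection‖ ≤ ‖K - L‖ := by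
  refine ContinuousLinearMap.opNorm_le_bound _ (norm_nonneg _) fun x ↦ ?_
  set w := W.starProjection x
  set z := V.starProjection x - w with hz
  have hw : w ∈ W := W.starProjection_apply_mem x
  have hxw : x - w ∈ Wᗮ := W.sub_starProjection_mem_orthogonal x
  have hzV : V.starProjection z = V.starProjection (x - w) := by
    rw [hz, map_sub, V.starProjection_eq_self_iff.2 (V.starProjection_apply_mem x), ← map_sub]
  have hzV_orthogonal : Vᗮ.starProjection z = -(w - V.starProjection w) := by
    rw [V.starProjection_orthogonal_val, hzV, hz, map_sub]
    abel
  refine le_of_sq_le_sq ?_ (by positivity)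
  calc ‖z‖ ^ 2 = ‖V.starProjection (x - w)‖ ^ 2 + ‖w - V.starProjection w‖ ^ 2 := by
        rw [V.norm_sq_eq_add_norm_sq_starProjection z, hzV, hzV_orthogonal, norm_neg]
    _ ≤ (‖K - L‖ * ‖x - w‖) ^ 2 + (‖K - L‖ * ‖w‖) ^ 2 := by
        gcongr
        · exact norm_starProjection_le_norm_sub_mul_of_mem_orthogonal hK hL hxw
        · exact norm_sub_starProjection_le_norm_sub_mul_of_mem hK hL hw
    _ = (‖K - L‖ * ‖x‖) ^ 2 := by
        rw [mul_pow _ ‖x‖, W.norm_sq_eq_add_norm_sq_starProjection x,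
          W.starProjection_orthogonal_val]
        ring

lemma continuousAt_starProjection_of_isProj {M : Type*} [TopologicalSpace M]
    {V : M → Submodule 𝕜 X} [∀ m, (V m).HasOrthogonalProjection] {K : M → X →L[𝕜] X} {m₀ : M}
    (hK : ContinuousAt K m₀) (hKV : ∀ᶠ m in 𝓝 m₀, LinearMap.IsProj (V m) (K m)) :
    ContinuousAt (fun m ↦ (V m).starProjection) m₀ := by
  rw [ContinuousAt, tendsto_iff_norm_sub_tendsto_zero] at hK ⊢
  refine squeeze_zero' (.of_forall fun _ ↦ norm_nonneg _) ?_ hK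
  filter_upwards [hKV] with m hm
  exact norm_starProjection_sub_starProjection_le_s7 hm hKV.self_of_nhds

end OrthogonalProjections

section IsOrthoProjOn

variable {X : Type*} [NormedAddCommGroup X] [InnerProductSpace ℝ X] {V : Submodule ℝ X}
  {P : X →L[ℝ] X}

lemma IsOrthoProjOn.hasOrthogonalProjection_s7 (hP : IsOrthoProjOn V P) :
    V.HasOrthogonalProjection :=
  ⟨fun x ↦ ⟨P x, (hP x).1, (hP x).2⟩⟩

lemma IsOrthoProjOn.eq_starProjection [V.HasOrthogonalProjection] (hP : IsOrthoProjOn V P) :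
    P = V.starProjection :=
  ContinuousLinearMap.ext fun x ↦
    (Submodule.eq_starProjection_of_mem_orthogonal (hP x).1 (hP x).2).symm

end IsOrthoProjOn

theorem stmt7_general {𝕜 X M : Type*} [RCLike 𝕜] [NormedAddCommGroup X] [InnerProductSpace 𝕜 X]
    [CompleteSpace X] [TopologicalSpace M] {E F : M → Submodule 𝕜 X}
    [∀ m, (E m ⊓ F m).HasOrthogonalProjection] {PE PF : M → X →L[𝕜] X} {m₀ : M}
    (hPEcont : ContinuousAt PE m₀) (hPFcont : ContinuousAt PF m₀)
    (hPEidem : ∀ m, IsIdempotentElem (PE m)) (hPFidem : ∀ m, IsIdempotentElem (PF m))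
    (hPErange : ∀ m, (PE m).range = E m) (hPFrange : ∀ m, (PF m).range = F m)
    (hsum : E m₀ ⊔ F m₀ = ⊤) :
    ContinuousAt (fun m ↦ (E m ⊓ F m).starProjection) m₀ := by
  have hPE m := isProj_of_isIdempotentElem_of_range_eq (hPEidem m) (hPErange m)
  have hPF m := isProj_of_isIdempotentElem_of_range_eq (hPFidem m) (hPFrange m)
  have hsplit : ((PE m₀).coprod (PF m₀)).HasRightInverse :=
    hasRightInverse_coprod_of_range_sup_range_eq_top (by rw [hPErange, hPFrange, hsum])
  obtain ⟨K, hK, hKproj⟩ := exists_continuousAt_isProj_inf hPEcont hPFcont hPE hPF hsplit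
  exact continuousAt_starProjection_of_isProj hK hKproj

/-- If `E`, `F` are continuous subbundles of closed subspaces of a real Hilbert space
over a metric space `M` with `E_m + F_m = X` and `dim E_mᗮ < ∞` for all `m`, then the
family `{E_m ∩ F_m}` is orthogonally continuous: the map sending `m` to the orthogonal
projection onto `E_m ⊓ F_m` is continuous in operator norm. -/
theorem stmt7 {X : Type*} [NormedAddCommGroup X] [InnerProductSpace ℝ X] [CompleteSpace X]
    {M : Type*} [MetricSpace M]
    (E F : M → Submodule ℝ X)
    (PE PF : M → X →L[ℝ] X)
    (hPEcont : Continuous PE) (hPFcont : Continuous PF)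
    (hPEidem : ∀ m, (PE m).comp (PE m) = PE m)
    (hPFidem : ∀ m, (PF m).comp (PF m) = PF m)
    (hPErange : ∀ m, LinearMap.range (PE m : X →ₗ[ℝ] X) = E m)
    (hPFrange : ∀ m, LinearMap.range (PF m : X →ₗ[ℝ] X) = F m)
    (hsum : ∀ m, E m ⊔ F m = ⊤)
    (hfin : ∀ m, FiniteDimensional ℝ ((E m)ᗮ)) :
    ∀ P : M → X →L[ℝ] X, (∀ m, IsOrthoProjOn (E m ⊓ F m) (P m)) → Continuous P := by
  intro P hP
  have (m : M) : (E m ⊓ F m).HasOrthogonalProjection := (hP m).hasOrthogonalProjection_s7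
  rw [funext fun m ↦ (hP m).eq_starProjection, continuous_iff_continuousAt]
  exact fun m ↦ stmt7_general hPEcont.continuousAt hPFcont.continuousAt hPEidem hPFidem
    hPErange hPFrange (hsum m)
end

section
/- Let (M,d) be a compact metric space, X a real Hilbert space, and let {S(x)}_{x∈M}, {U(x)}_{x∈M}, {V(x)}_{x∈M} be continuous subbundles of closed subspaces of X over M such that for every x ∈ M: S(x) ∩ U(x) = {0}, S(x) + U(x) = X, and S(x) ∩ V(x) = {0}. Assume each V(x) is finite dimensional with the same dimension for every x ∈ M. Then there exists M' > 0 such that for all x ∈ M and every nonzero v ∈ V(x), writing v = v^s + v^u with v^s ∈ S(x) and v^u ∈ U(x) (so v^u ≠ 0), one has ‖v^s‖ ≤ M' ‖v^u‖; that is, the inclination of V(x) relative to the decomposition S(x) ⊕ U(x) = X is bounded uniformly on M. -/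
open Filter

/-!
A vector `v` lies in `V(x)` exactly when `(1 - P_V(x)) v = 0`, and in `S(x)` exactly when
`(1 - P_S(x)) v = 0`. Since `V(x)` is finite dimensional and meets `S(x)` trivially, the operator
`T(x) = (1 - P_V(x), 1 - P_S(x)) : X → X × X` is bounded below on the whole of `X`. Unlike the
restriction of `1 - P_S(x)` to `V(x)`, the operator `T(x)` has a domain independent of `x`, and it
depends continuously on `x` in norm. Being bounded below is stable under small perturbations, so by
compactness `‖v‖ ≤ K ‖T(x) v‖` with `K` independent of `x`. For `v ∈ V(x)` and `s ∈ S(x)` this reads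
`‖v‖ ≤ K ‖(1 - P_S(x)) v‖ = K ‖(1 - P_S(x)) (v - s)‖`, which bounds `‖v‖`, hence `‖s‖`, by a
constant multiple of `‖v - s‖`.
-/

open scoped NNReal Topology

lemma antilipschitzWith_mono {α β : Type*} [PseudoEMetricSpace α] [PseudoEMetricSpace β]
    {f : α → β} {K L : ℝ≥0} (hf : AntilipschitzWith K f) (hKL : K ≤ L) : AntilipschitzWith L f :=
  fun x y ↦ (hf x y).trans (by gcongr)

section BoundedBelow

variable {𝕜 E F : Type*} [NontriviallyNormedField 𝕜]
  [SeminormedAddCommGroup E] [NormedSpace 𝕜 E] [SeminormedAddCommGroup F] [NormedSpace 𝕜 F]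

lemma exists_eventually_antilipschitzWith {f : E →L[𝕜] F} {K : ℝ≥0} (hf : AntilipschitzWith K f) :
    ∃ K' : ℝ≥0, ∀ᶠ g : E →L[𝕜] F in 𝓝 f, AntilipschitzWith K' g := by
  -- The perturbation must be smaller than `K⁻¹`, which is the junk value `0` when `K = 0`.
  have hf' : AntilipschitzWith (K + 1) f := antilipschitzWith_mono hf le_self_add
  have hsmall : ∀ᶠ g in 𝓝 f, ‖g - f‖₊ < (2 * (K + 1))⁻¹ :=
    (continuous_id.sub continuous_const).nnnorm.continuousAt.eventually_lt
      continuousAt_const (by simp)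
  have hlt : (2 * (K + 1))⁻¹ < (K + 1)⁻¹ :=
    inv_strictAnti₀ (by positivity) (lt_mul_of_one_lt_left (by positivity) one_lt_two)
  refine ⟨((K + 1)⁻¹ - (2 * (K + 1))⁻¹)⁻¹, hsmall.mono fun g hg ↦ ?_⟩
  exact hf'.add_sub_lipschitzWith ((g - f).lipschitz.weaken hg.le) hlt

lemma exists_forall_antilipschitzWith {A : Type*} [TopologicalSpace A] [CompactSpace A]
    {f : A → E →L[𝕜] F} (hf : Continuous f) (h : ∀ a, ∃ K : ℝ≥0, AntilipschitzWith K (f a)) :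
    ∃ K : ℝ≥0, ∀ a, AntilipschitzWith K (f a) := by
  suffices ∃ K : ℝ≥0, ∀ a ∈ Set.univ, AntilipschitzWith K (f a) by simpa using this
  refine isCompact_univ.induction_on
    (p := fun s : Set A ↦ ∃ K : ℝ≥0, ∀ a ∈ s, AntilipschitzWith K (f a)) ⟨0, by simp⟩
    ?mono ?union ?nhds
  case mono => exact fun s t hst ⟨K, hK⟩ ↦ ⟨K, fun a ha ↦ hK a (hst ha)⟩
  case union =>
    rintro s t ⟨K, hK⟩ ⟨L, hL⟩
    refine ⟨max K L, ?_⟩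
    rintro a (ha | ha)
    · exact antilipschitzWith_mono (hK a ha) (le_max_left K L)
    · exact antilipschitzWith_mono (hL a ha) (le_max_right K L)
  case nhds =>
    intro a _
    obtain ⟨K, hK⟩ := h a
    obtain ⟨K', hK'⟩ := exists_eventually_antilipschitzWith hK
    exact ⟨_, mem_nhdsWithin_of_mem_nhds (hf.continuousAt.eventually hK'), K', fun _ hb ↦ hb⟩

lemma antilipschitzWith_id_sub_prod {p : E →L[𝕜] E} {q : E →L[𝕜] F} {K : ℝ≥0}
    (h : ∀ v ∈ p.range, ‖v‖ ≤ K * ‖q v‖) :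
    AntilipschitzWith (1 + K * (1 + ‖q‖₊)) ((ContinuousLinearMap.id 𝕜 E - p).prod q) := by
  refine ContinuousLinearMap.antilipschitz_of_bound _ fun x ↦ ?_
  set N : ℝ := ‖((ContinuousLinearMap.id 𝕜 E - p).prod q) x‖
  have h_fst : ‖x - p x‖ ≤ N := norm_fst_le (x - p x, q x)
  have h_snd : ‖q x‖ ≤ N := norm_snd_le (x - p x, q x)
  have h_comp : ‖q (p x)‖ ≤ (1 + ‖q‖) * N :=
    calc ‖q (p x)‖ = ‖q x - q (x - p x)‖ := by rw [map_sub, sub_sub_cancel]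
      _ ≤ ‖q x‖ + ‖q‖ * ‖x - p x‖ := (norm_sub_le _ _).trans (by gcongr; exact q.le_opNorm _)
      _ ≤ N + ‖q‖ * N := by gcongr
      _ = (1 + ‖q‖) * N := by ring
  calc ‖x‖ = ‖(x - p x) + p x‖ := by rw [sub_add_cancel]
    _ ≤ ‖x - p x‖ + K * ‖q (p x)‖ := norm_add_le_of_le le_rfl (h _ ⟨x, rfl⟩)
    _ ≤ N + K * ((1 + ‖q‖) * N) := by gcongr
    _ = (1 + K * (1 + ‖q‖₊) : ℝ≥0) * N := by push_cast; ring

lemma exists_forall_mem_range_norm_le {A : Type*} [TopologicalSpace A] [CompactSpace A]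
    {p : A → E →L[𝕜] E} {q : A → E →L[𝕜] F} (hp : Continuous p) (hq : Continuous q)
    (hp_idem : ∀ a, IsIdempotentElem (p a))
    (h : ∀ a, ∃ K : ℝ≥0, ∀ v ∈ (p a).range, ‖v‖ ≤ K * ‖q a v‖) :
    ∃ K : ℝ≥0, ∀ a, ∀ v ∈ (p a).range, ‖v‖ ≤ K * ‖q a v‖ := by
  obtain ⟨K, hK⟩ : ∃ K : ℝ≥0, ∀ a,
      AntilipschitzWith K ((ContinuousLinearMap.id 𝕜 E - p a).prod (q a)) :=
    exists_forall_antilipschitzWith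
      ((ContinuousLinearMap.prodL 𝕜).continuous.comp ((continuous_const.sub hp).prodMk hq))
      fun a ↦ (h a).imp' _ fun _ ↦ antilipschitzWith_id_sub_prod
  refine ⟨K, fun a v hv ↦ ?_⟩
  have hp_idem_lin := ContinuousLinearMap.IsIdempotentElem.toLinearMap (hp_idem a)
  have hv_fix : p a v = v := (LinearMap.IsIdempotentElem.mem_range_iff hp_idem_lin).mp hv
  simpa [hv_fix, Prod.norm_def] using (hK a).le_mul_norm (map_zero _) v

end BoundedBelow

lemma exists_forall_mem_norm_le_of_disjoint_ker {𝕜 E F : Type*} [NontriviallyNormedField 𝕜]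
    [CompleteSpace 𝕜] [NormedAddCommGroup E] [NormedSpace 𝕜 E] [NormedAddCommGroup F]
    [NormedSpace 𝕜 F] (q : E →ₗ[𝕜] F) (V : Submodule 𝕜 E) [FiniteDimensional 𝕜 V]
    (h : Disjoint V q.ker) : ∃ K : ℝ≥0, ∀ v ∈ V, ‖v‖ ≤ K * ‖q v‖ := by
  have hker : (q.domRestrict V).ker = ⊥ := by
    rwa [LinearMap.ker_domRestrict, ← Submodule.disjoint_iff_comap_eq_bot]
  obtain ⟨K, -, hK⟩ := (q.domRestrict V).exists_antilipschitzWith hker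
  exact ⟨K, fun v hv ↦ hK.le_mul_norm (map_zero _) ⟨v, hv⟩⟩

lemma norm_le_mul_norm_sub_of_map_eq_zero {𝕜 E F : Type*} [NontriviallyNormedField 𝕜]
    [SeminormedAddCommGroup E] [NormedSpace 𝕜 E] [SeminormedAddCommGroup F] [NormedSpace 𝕜 F]
    {q : E →L[𝕜] F} {K : ℝ≥0} {s v : E} (hs : q s = 0) (hv : ‖v‖ ≤ K * ‖q v‖) :
    ‖s‖ ≤ (1 + K * ‖q‖) * ‖v - s‖ :=
  calc ‖s‖ ≤ ‖v - s‖ + ‖v‖ := by rw [norm_sub_rev]; exact norm_le_norm_sub_add s v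
    _ ≤ ‖v - s‖ + K * ‖q (v - s)‖ := by rw [map_sub, hs, sub_zero]; gcongr
    _ ≤ ‖v - s‖ + K * (‖q‖ * ‖v - s‖) := by gcongr; exact q.le_opNorm _
    _ = (1 + K * ‖q‖) * ‖v - s‖ := by ring

theorem stmt8_general {𝕜 X M : Type*} [NontriviallyNormedField 𝕜] [CompleteSpace 𝕜]
    [NormedAddCommGroup X] [NormedSpace 𝕜 X] [TopologicalSpace M] [CompactSpace M]
    (S V : M → Submodule 𝕜 X) (PS PV : M → X →L[𝕜] X)
    (hPScont : Continuous PS) (hPVcont : Continuous PV)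
    (hPSidem : ∀ m, IsIdempotentElem (PS m)) (hPVidem : ∀ m, IsIdempotentElem (PV m))
    (hPSrange : ∀ m, (PS m).range = S m) (hPVrange : ∀ m, (PV m).range = V m)
    (hSV : ∀ m, Disjoint (S m) (V m)) (hfin : ∀ m, FiniteDimensional 𝕜 (V m)) :
    ∃ C > 0, ∀ m, ∀ v ∈ V m, ∀ s ∈ S m, ‖s‖ ≤ C * ‖v - s‖ := by
  let Q : M → X →L[𝕜] X := fun m ↦ ContinuousLinearMap.id 𝕜 X - PS m
  have hQcont : Continuous Q := continuous_const.sub hPScont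
  have hQker (m : M) : (Q m).ker = S m := by
    have hPSidem_lin := ContinuousLinearMap.IsIdempotentElem.toLinearMap (hPSidem m)
    exact (LinearMap.IsIdempotentElem.range_eq_ker hPSidem_lin).symm.trans (hPSrange m)
  have hpointwise (m : M) : ∃ K : ℝ≥0, ∀ v ∈ (PV m).range, ‖v‖ ≤ K * ‖Q m v‖ := by
    rw [hPVrange]
    exact exists_forall_mem_norm_le_of_disjoint_ker _ _ (hQker m ▸ (hSV m).symm)
  obtain ⟨K, hK⟩ := exists_forall_mem_range_norm_le hPVcont hQcont hPVidem hpointwise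
  obtain ⟨B, hB_pos, hB⟩ := (isCompact_range hQcont).isBounded.exists_pos_norm_le
  refine ⟨1 + K * B, by positivity, fun m v hv s hs ↦ ?_⟩
  have hQs : Q m s = 0 := by rwa [← hQker m] at hs
  have hQv : ‖v‖ ≤ K * ‖Q m v‖ := hK m v (hPVrange m ▸ hv)
  grw [norm_le_mul_norm_sub_of_map_eq_zero hQs hQv, hB (Q m) ⟨m, rfl⟩]

/-- Over a compact metric space, the inclination of a finite-dimensional continuous
subbundle `V` (transverse to `S`) relative to a continuous decomposition
`S(x) ⊕ U(x) = X` is uniformly bounded. -/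
theorem stmt8 {X : Type*} [NormedAddCommGroup X] [InnerProductSpace ℝ X] [CompleteSpace X]
    {M : Type*} [MetricSpace M] [CompactSpace M]
    (S U V : M → Submodule ℝ X)
    (PS PU PV : M → X →L[ℝ] X)
    (hPScont : Continuous PS) (hPUcont : Continuous PU) (hPVcont : Continuous PV)
    (hPSidem : ∀ m, (PS m).comp (PS m) = PS m)
    (hPUidem : ∀ m, (PU m).comp (PU m) = PU m)
    (hPVidem : ∀ m, (PV m).comp (PV m) = PV m)
    (hPSrange : ∀ m, LinearMap.range (PS m : X →ₗ[ℝ] X) = S m)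
    (hPUrange : ∀ m, LinearMap.range (PU m : X →ₗ[ℝ] X) = U m)
    (hPVrange : ∀ m, LinearMap.range (PV m : X →ₗ[ℝ] X) = V m)
    (hSUinf : ∀ m, S m ⊓ U m = ⊥) (hSUsup : ∀ m, S m ⊔ U m = ⊤)
    (hSV : ∀ m, S m ⊓ V m = ⊥)
    (hfin : ∀ m, FiniteDimensional ℝ (V m))
    (n : ℕ) (hdim : ∀ m, Module.finrank ℝ (V m) = n) :
    ∃ M' > 0, ∀ m : M, ∀ v vs vu : X,
      v ∈ V m → v ≠ 0 → vs ∈ S m → vu ∈ U m → v = vs + vu →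
      ‖vs‖ ≤ M' * ‖vu‖ := by
  obtain ⟨C, hC, h⟩ := stmt8_general S V PS PV hPScont hPVcont hPSidem hPVidem hPSrange hPVrange
    (fun m ↦ disjoint_iff.mpr (hSV m)) hfin
  exact ⟨C, hC, fun m v vs vu hv _ hvs _ hsum ↦ by simpa [hsum] using h m v hv vs hvs⟩
end

section
/- Let (M,d) be a metric space, A ⊆ M a nonempty set, U ⊆ M, and T : M → M a map with T(U) ⊆ U that is Lipschitz on U with constant L₁ > 1 (d(T x, T y) ≤ L₁ d(x,y) for all x, y ∈ U). Assume there exist C > 1 and γ > 0 such that for every n ∈ ℕ and every x ∈ U, inf_{a∈A} d(T^n x, a) ≤ C e^{−γ n}. Then there exist C₂ > 0 and α ∈ (0,1) — one may take α = γ/(γ + ln L₁) — such that for every δ with 0 < δ < 1 and every δ-pseudo-orbit x : ℤ → U of T contained in U, one has inf_{a∈A} d(x_n, a) ≤ C₂ δ^α for all n ∈ ℤ. -/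
/-!
Follow the true orbit of `x (n - k)` for `k` steps. It ends within `C e^{-γk}` of `A` by
attraction, and within `δ (L^k - 1) / (L - 1)` of `x n` because a Lipschitz map amplifies each of
the `k` errors geometrically. The real time `t = -log δ / (γ + log L)` balances the two
contributions, `e^{-γt} = δ L^t = δ^α` with `α = γ / (γ + log L)`, and rounding `t` down to an
integer costs only a factor `e^γ` in the first of them.
-/

open Real
open scoped NNReal

/-- A `δ`-pseudo-orbit of `T`: each step of the sequence follows `T` up to an error `δ`. The index
type is arbitrary so that forward (`ℕ`) and bi-infinite (`ℤ`) pseudo-orbits are both covered. -/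
def IsPseudoOrbit {M ι : Type*} [PseudoMetricSpace M] [AddMonoidWithOne ι]
    (T : M → M) (δ : ℝ) (x : ι → M) : Prop :=
  ∀ n, dist (T (x n)) (x (n + 1)) ≤ δ

namespace IsPseudoOrbit

variable {M ι : Type*} [PseudoMetricSpace M] [AddMonoidWithOne ι]
  {T : M → M} {U A : Set M} {K : ℝ≥0} {δ : ℝ} {x : ι → M}

theorem dist_iterate_le (hx : IsPseudoOrbit T δ x) (hxU : ∀ n, x n ∈ U)
    (hTU : Set.MapsTo T U U) (hT : LipschitzOnWith K T U) (m : ι) (k : ℕ) :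
    dist (T^[k] (x m)) (x (m + k)) ≤ δ * ∑ i ∈ Finset.range k, (K : ℝ) ^ i := by
  induction k with
  | zero => simp
  | succ k ih =>
    have hiter : T^[k] (x m) ∈ U := hTU.iterate k (hxU m)
    rw [Function.iterate_succ_apply', Nat.cast_succ, ← add_assoc, geom_sum_succ]
    calc dist (T (T^[k] (x m))) (x (m + k + 1))
        ≤ dist (T (T^[k] (x m))) (T (x (m + k))) + dist (T (x (m + k))) (x (m + k + 1)) :=
          dist_triangle _ _ _
      _ ≤ K * dist (T^[k] (x m)) (x (m + k)) + δ :=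
          add_le_add (hT.dist_le_mul _ hiter _ (hxU _)) (hx _)
      _ ≤ K * (δ * ∑ i ∈ Finset.range k, (K : ℝ) ^ i) + δ := by gcongr
      _ = δ * (K * ∑ i ∈ Finset.range k, (K : ℝ) ^ i + 1) := by ring

theorem infDist_add_natCast_le (hx : IsPseudoOrbit T δ x) (hxU : ∀ n, x n ∈ U)
    (hTU : Set.MapsTo T U U) (hT : LipschitzOnWith K T U) (m : ι) (k : ℕ) :
    Metric.infDist (x (m + k)) A ≤
      Metric.infDist (T^[k] (x m)) A + δ * ∑ i ∈ Finset.range k, (K : ℝ) ^ i :=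
  calc Metric.infDist (x (m + k)) A
      ≤ Metric.infDist (T^[k] (x m)) A + dist (x (m + k)) (T^[k] (x m)) :=
        Metric.infDist_le_infDist_add_dist
    _ ≤ Metric.infDist (T^[k] (x m)) A + δ * ∑ i ∈ Finset.range k, (K : ℝ) ^ i := by
        rw [dist_comm]
        gcongr
        exact hx.dist_iterate_le hxU hTU hT m k

end IsPseudoOrbit

theorem exp_neg_mul_floor_le {γ : ℝ} (hγ : 0 ≤ γ) (t : ℝ) :
    exp (-γ * ⌊t⌋₊) ≤ exp γ * exp (-γ * t) := by
  have hfloor : γ * t ≤ γ * (⌊t⌋₊ + 1) := by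
    gcongr
    exact (Nat.lt_floor_add_one t).le
  rw [← exp_add, exp_le_exp]
  linarith

/-- The real time at which the decaying `e^{-γt}` and the growing `δ L^t` are equal. -/
noncomputable def balanceTime (γ L δ : ℝ) : ℝ :=
  -log δ / (γ + log L)

section BalanceTime

variable {γ L δ : ℝ}

theorem exp_neg_mul_balanceTime (γ L : ℝ) (hδ : 0 < δ) :
    exp (-γ * balanceTime γ L δ) = δ ^ (γ / (γ + log L)) := by
  rw [rpow_def_of_pos hδ, balanceTime]
  congr 1
  ring

theorem mul_rpow_balanceTime (hL : 0 < L) (hγL : γ + log L ≠ 0) (hδ : 0 < δ) :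
    δ * L ^ balanceTime γ L δ = δ ^ (γ / (γ + log L)) := by
  have hexponent : log δ + log L * balanceTime γ L δ = log δ * (γ / (γ + log L)) := by
    rw [balanceTime]
    field_simp
    ring
  rw [rpow_def_of_pos hL, rpow_def_of_pos hδ, ← hexponent, exp_add, exp_log hδ]

-- Subtracting `1` makes the bound survive `δ > 1`, where the floor of the negative time is `0`.
theorem mul_pow_floor_balanceTime_sub_one_le (hL : 1 ≤ L) (hγL : γ + log L ≠ 0) (hδ : 0 < δ) :
    δ * (L ^ ⌊balanceTime γ L δ⌋₊ - 1) ≤ δ ^ (γ / (γ + log L)) := by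
  rcases le_total 0 (balanceTime γ L δ) with ht | ht
  · calc δ * (L ^ ⌊balanceTime γ L δ⌋₊ - 1)
        ≤ δ * L ^ (⌊balanceTime γ L δ⌋₊ : ℝ) := by
          rw [rpow_natCast]
          gcongr
          exact sub_le_self _ zero_le_one
      _ ≤ δ * L ^ balanceTime γ L δ := by
          gcongr
          exact Nat.floor_le ht
      _ = δ ^ (γ / (γ + log L)) := mul_rpow_balanceTime (by linarith) hγL hδ
  · rw [Nat.floor_of_nonpos ht, pow_zero, sub_self, mul_zero]
    positivity

end BalanceTime

theorem stmt12_general {M : Type*} [PseudoMetricSpace M] {T : M → M} {A U : Set M}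
    (_hA : A.Nonempty) (hTU : Set.MapsTo T U U) {L : ℝ≥0} (hL : 1 < (L : ℝ))
    (hLip : LipschitzOnWith L T U) {C γ : ℝ} (hγ : 0 < γ)
    (hattr : ∀ n : ℕ, ∀ x ∈ U, Metric.infDist (T^[n] x) A ≤ C * exp (-γ * n)) :
    0 < γ / (γ + log L) ∧ γ / (γ + log L) < 1 ∧
    ∀ δ : ℝ, 0 < δ → ∀ x : ℤ → M, (∀ n, x n ∈ U) → IsPseudoOrbit T δ x →
      ∀ n, Metric.infDist (x n) A ≤ (C * exp γ + 1 / (L - 1)) * δ ^ (γ / (γ + log L)) := by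
  have hlog : 0 < log L := log_pos hL
  have hγL : 0 < γ + log L := add_pos hγ hlog
  refine ⟨div_pos hγ hγL, (div_lt_one hγL).2 (lt_add_of_pos_right γ hlog), ?_⟩
  intro δ hδ x hxU hx n
  have hC : 0 ≤ C := by simpa using Metric.infDist_nonneg.trans (hattr 0 _ (hxU n))
  have : 0 ≤ (L : ℝ) - 1 := sub_nonneg.2 hL.le
  let k := ⌊balanceTime γ L δ⌋₊
  calc Metric.infDist (x n) A
      ≤ Metric.infDist (T^[k] (x (n - k))) A + δ * ∑ i ∈ Finset.range k, (L : ℝ) ^ i := by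
        simpa only [sub_add_cancel] using hx.infDist_add_natCast_le hxU hTU hLip (n - k) k
    _ = Metric.infDist (T^[k] (x (n - k))) A + δ * (L ^ k - 1) / (L - 1) := by
        rw [geom_sum_eq hL.ne', mul_div_assoc]
    _ ≤ C * (exp γ * exp (-γ * balanceTime γ L δ)) + δ ^ (γ / (γ + log L)) / (L - 1) := by
        gcongr
        · exact (hattr k _ (hxU _)).trans
            (mul_le_mul_of_nonneg_left (exp_neg_mul_floor_le hγ.le _) hC)
        · exact mul_pow_floor_balanceTime_sub_one_le hL.le hγL.ne' hδ
    _ = (C * exp γ + 1 / (L - 1)) * δ ^ (γ / (γ + log L)) := by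
        rw [exp_neg_mul_balanceTime γ L hδ]
        ring

/-- If `A` attracts the positively invariant set `U` exponentially and `T` is Lipschitz
on `U` with constant `L₁ > 1`, then every `δ`-pseudo-orbit of `T` in `U` stays within
`C₂ δ^α` of `A`, where `α = γ/(γ + ln L₁) ∈ (0,1)`. -/
theorem stmt12 {M : Type*} [MetricSpace M] (T : M → M)
    (A U : Set M) (hA : A.Nonempty) (hTU : Set.MapsTo T U U)
    (L₁ : ℝ) (hL₁ : 1 < L₁)
    (hLip : ∀ x ∈ U, ∀ y ∈ U, dist (T x) (T y) ≤ L₁ * dist x y)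
    (C γ : ℝ) (hC : 1 < C) (hγ : 0 < γ)
    (hattr : ∀ n : ℕ, ∀ x ∈ U, Metric.infDist (T^[n] x) A ≤ C * Real.exp (-γ * n)) :
    0 < γ / (γ + Real.log L₁) ∧ γ / (γ + Real.log L₁) < 1 ∧
    ∃ C₂ > 0, ∀ δ : ℝ, 0 < δ → δ < 1 → ∀ x : ℤ → M,
      (∀ n : ℤ, x n ∈ U) → (∀ n : ℤ, dist (T (x n)) (x (n + 1)) ≤ δ) →
      ∀ n : ℤ, Metric.infDist (x n) A ≤ C₂ * δ ^ (γ / (γ + Real.log L₁)) := by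
  lift L₁ to ℝ≥0 using zero_le_one.trans hL₁.le
  have ⟨hα₀, hα₁, h⟩ := stmt12_general hA hTU hL₁ (.of_dist_le_mul hLip) hγ hattr
  exact ⟨hα₀, hα₁, _, add_pos (by positivity) (one_div_pos.2 (sub_pos.2 hL₁)), fun δ hδ _ => h δ hδ⟩
end

section
/- Let (M,d) be a metric space, T : M → M, A ⊆ M nonempty, and U ⊆ M with A ⊆ U and T(U) ⊆ U. Assume: (i) there exist C > 1 and γ > 0 with inf_{a∈A} d(T^n x, a) ≤ C e^{−γ n} for all x ∈ U and n ∈ ℕ; (ii) there is L₁ > 1 and, for each n ≥ 1, a constant L_n with 1 < L_n ≤ L₁^n such that d(T^n x, T^n y) ≤ L_n d(x,y) for all x, y ∈ U; (iii) limsup_{n→∞} n / ln(L_n) = +∞. Then there exists C₃ > 0 with the following property: for every α ∈ (0,1) there exists N ∈ ℕ, N ≥ 1, such that for every δ ∈ (0,1), every map S : M → M with sup_{x∈U} d(T^N x, S^N x) ≤ δ, and every set A' ⊆ U such that each point of A' lies on a bi-infinite orbit of S contained in A' (for every a ∈ A' there is ξ : ℤ → A' with ξ_0 = a and S(ξ_n)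 = ξ_{n+1} for all n ∈ ℤ), one has the Hausdorff semidistance bound dist_H(A', A) = sup_{a'∈A'} inf_{a∈A} d(a', a) ≤ C₃ δ^α. -/
/-!
Fix `α < 1`. Since the Lipschitz constants of the iterates of `T` grow subexponentially along a
subsequence, some iterate `F = T^[N]` has Lipschitz constant at most `q ^ (1 - α)`, where
`q = exp (γ * N)` is the rate at which `F` attracts. Following a point of `A'` back along `m + 1`
steps of `S^[N]` and then forward under `F` costs at most `δ * ∑ i ≤ m, (q ^ (1 - α)) ^ i`, a sum
dominated by its last term, while the endpoint is within `C / q ^ (m + 1)` of `A`. Choosing `m` with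
`q ^ m ≤ δ ^ (-α) < q ^ (m + 1)` makes both errors `O(δ ^ α)`.
-/

open Filter Metric Set
open scoped NNReal

lemma geom_sum_succ_le_two_mul_pow {R : Type*} [Semiring R] [PartialOrder R] [IsOrderedRing R]
    {r : R} (hr : 2 ≤ r) (m : ℕ) : ∑ i ∈ Finset.range (m + 1), r ^ i ≤ 2 * r ^ m := by
  have hr₀ : 0 ≤ r := zero_le_two.trans hr
  induction m with
  | zero => simp [one_le_two]
  | succ m ih =>
    calc ∑ i ∈ Finset.range (m + 2), r ^ i
        = r ^ (m + 1) + ∑ i ∈ Finset.range (m + 1), r ^ i := geom_sum_succ'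
      _ ≤ r ^ (m + 1) + 2 * r ^ m := by gcongr
      _ ≤ r ^ (m + 1) + r * r ^ m := by gcongr
      _ = 2 * r ^ (m + 1) := by rw [← pow_succ', two_mul]

lemma rpow_one_sub_pow_mul_le_rpow {q α δ : ℝ} (hq : 0 ≤ q) (hα : α ≤ 1) (hδ₀ : 0 < δ)
    (hδ₁ : δ ≤ 1) {m : ℕ} (hm : q ^ m ≤ δ ^ (-α)) :
    (q ^ (1 - α)) ^ m * δ ≤ δ ^ α := by
  have hexp : α ≤ -α * (1 - α) + 1 := by linarith [sq_nonneg (1 - α)]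
  calc (q ^ (1 - α)) ^ m * δ
      = (q ^ m) ^ (1 - α) * δ := by rw [Real.rpow_pow_comm hq]
    _ ≤ (δ ^ (-α)) ^ (1 - α) * δ := by gcongr
    _ = δ ^ (-α * (1 - α) + 1) := by
        rw [← Real.rpow_mul hδ₀.le, Real.rpow_add_one hδ₀.ne']
    _ ≤ δ ^ α := Real.rpow_le_rpow_of_exponent_ge hδ₀ hδ₁ hexp

lemma le_exp_of_inv_le_div_log {ε t x : ℝ} (hε : 0 < ε) (hx : 1 < x)
    (h : ε⁻¹ ≤ t / Real.log x) : x ≤ Real.exp (ε * t) := by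
  rw [le_div_iff₀ (Real.log_pos hx), inv_mul_le_iff₀ hε] at h
  exact (Real.log_le_iff_le_exp (by linarith)).1 h

lemma surjOn_of_forall_exists_int_orbit {X : Type*} {S : X → X} {B : Set X}
    (h : ∀ b ∈ B, ∃ ξ : ℤ → X, (∀ n, ξ n ∈ B) ∧ ξ 0 = b ∧ ∀ n, S (ξ n) = ξ (n + 1)) :
    SurjOn S B B := by
  intro b hb
  obtain ⟨ξ, hξB, rfl, hξS⟩ := h b hb
  exact ⟨ξ (-1), hξB (-1), hξS (-1)⟩

section PseudoMetricSpace

variable {M : Type*} [PseudoMetricSpace M] {A B U : Set M}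

lemma mem_cthickening_iff_infDist_le (hA : A.Nonempty) {r : ℝ} (hr : 0 ≤ r) {x : M} :
    x ∈ cthickening r A ↔ infDist x A ≤ r := by
  rw [mem_cthickening_iff, infDist, ENNReal.le_ofReal_iff_toReal_le (infEDist_ne_top hA) hr]

lemma frequently_lipschitzOnWith_exp {X : Type*} [PseudoMetricSpace X] {f : ℕ → M → X} {L : ℕ → ℝ}
    (hf : ∀ᶠ n in atTop, 1 < L n ∧ ∀ x ∈ U, ∀ y ∈ U, dist (f n x) (f n y) ≤ L n * dist x y)
    (hL : ∀ R : ℝ, ∃ᶠ n : ℕ in atTop, R ≤ n / Real.log (L n)) {ε : ℝ} (hε : 0 < ε) :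
    ∃ᶠ n : ℕ in atTop, LipschitzOnWith (Real.exp (ε * n)).toNNReal (f n) U := by
  refine ((hL ε⁻¹).and_eventually hf).mono fun n ⟨hn, hLn, hfn⟩ ↦ ?_
  refine LipschitzOnWith.of_dist_le_mul fun x hx y hy ↦ (hfn x hx y hy).trans ?_
  gcongr
  exact (le_exp_of_inv_le_div_log hε hLn hn).trans (Real.le_coe_toNNReal _)

section Shadowing

variable {F G : M → M} {δ : ℝ}

-- The forward `G`-orbit of `x` may leave `B`, so the induction on `m` peels off the last step.
lemma exists_dist_iterate_le_mul_geom_sum {K : ℝ≥0} (hFU : MapsTo F U U)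
    (hFK : LipschitzOnWith K F U) (hBU : B ⊆ U) (hG : SurjOn G B B)
    (hFG : ∀ x ∈ B, dist (F x) (G x) ≤ δ) (m : ℕ) {b : M} (hb : b ∈ B) :
    ∃ x ∈ B, dist (F^[m] x) b ≤ δ * ∑ i ∈ Finset.range m, (K : ℝ) ^ i := by
  induction m generalizing b with
  | zero => exact ⟨b, hb, by simp⟩
  | succ m ih =>
    obtain ⟨c, hc, rfl⟩ := hG hb
    obtain ⟨x, hx, hxc⟩ := ih hc
    refine ⟨x, hx, ?_⟩
    calc dist (F^[m + 1] x) (G c)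
        ≤ dist (F (F^[m] x)) (F c) + dist (F c) (G c) := by
          rw [Function.iterate_succ_apply']
          exact dist_triangle _ _ _
      _ ≤ K * dist (F^[m] x) c + δ :=
          add_le_add (hFK.dist_le_mul _ (hFU.iterate m (hBU hx)) _ (hBU hc)) (hFG c hc)
      _ ≤ K * (δ * ∑ i ∈ Finset.range m, (K : ℝ) ^ i) + δ := by gcongr
      _ = δ * ∑ i ∈ Finset.range (m + 1), (K : ℝ) ^ i := by rw [geom_sum_succ]; ring

-- For `0 ≤ r`, the inclusion `B ⊆ cthickening r A` says that `dist_H(B, A) ≤ r`.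
theorem subset_cthickening_mul_rpow {C q α : ℝ} (hC : 0 ≤ C) (hq : 1 < q) (hα₀ : 0 ≤ α)
    (hα₁ : α ≤ 1) (hqα : 2 ≤ q ^ (1 - α)) (hδ₀ : 0 < δ) (hδ₁ : δ ≤ 1) (hFU : MapsTo F U U)
    (hFA : ∀ m, MapsTo F^[m] U (cthickening (C / q ^ m) A))
    (hFq : LipschitzOnWith (q ^ (1 - α)).toNNReal F U) (hBU : B ⊆ U) (hG : SurjOn G B B)
    (hFG : ∀ x ∈ B, dist (F x) (G x) ≤ δ) :
    B ⊆ cthickening ((2 + C) * δ ^ α) A := by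
  intro b hb
  obtain ⟨m, hm, hm'⟩ : ∃ m : ℕ, q ^ m ≤ δ ^ (-α) ∧ δ ^ (-α) < q ^ (m + 1) :=
    exists_nat_pow_near (Real.one_le_rpow_of_pos_of_le_one_of_nonpos hδ₀ hδ₁ (by linarith)) hq
  obtain ⟨x, hx, hxb⟩ := exists_dist_iterate_le_mul_geom_sum hFU hFq hBU hG hFG (m + 1) hb
  rw [Real.coe_toNNReal _ (by positivity)] at hxb
  have hshadow : dist b (F^[m + 1] x) ≤ 2 * δ ^ α :=
    calc dist b (F^[m + 1] x)
        ≤ δ * ∑ i ∈ Finset.range (m + 1), (q ^ (1 - α)) ^ i := by rwa [dist_comm]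
      _ ≤ δ * (2 * (q ^ (1 - α)) ^ m) := by gcongr; exact geom_sum_succ_le_two_mul_pow hqα m
      _ = 2 * ((q ^ (1 - α)) ^ m * δ) := by ring
      _ ≤ 2 * δ ^ α := by
          gcongr
          exact rpow_one_sub_pow_mul_le_rpow (by linarith) hα₁ hδ₀ hδ₁ hm
  have hattract : C / q ^ (m + 1) ≤ C * δ ^ α :=
    calc C / q ^ (m + 1) ≤ C / δ ^ (-α) := by gcongr
      _ = C * δ ^ α := by rw [Real.rpow_neg hδ₀.le, div_inv_eq_mul]
  have hFx : F^[m + 1] x ∈ cthickening (C * δ ^ α) A :=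
    cthickening_mono hattract A (hFA (m + 1) (hBU hx))
  rw [add_mul]
  exact cthickening_cthickening_subset (by positivity) (by positivity) A
    (mem_cthickening_of_dist_le b _ _ _ hFx hshadow)

end Shadowing

theorem stmt17_general {T : M → M} (hTU : MapsTo T U U) {C γ : ℝ} (hC : 0 ≤ C) (hγ : 0 < γ)
    (hattr : ∀ n : ℕ, MapsTo T^[n] U (cthickening (C * Real.exp (-γ * n)) A))
    (hLip : ∀ ε > 0, ∃ᶠ n : ℕ in atTop, LipschitzOnWith (Real.exp (ε * n)).toNNReal T^[n] U)
    {α : ℝ} (hα₀ : 0 ≤ α) (hα₁ : α < 1) :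
    ∃ N : ℕ, 1 ≤ N ∧ ∀ δ : ℝ, 0 < δ → δ ≤ 1 → ∀ S : M → M, ∀ A' ⊆ U,
      (∀ x ∈ A', dist (T^[N] x) (S^[N] x) ≤ δ) → SurjOn S A' A' →
        A' ⊆ cthickening ((2 + C) * δ ^ α) A := by
  have hε : 0 < γ * (1 - α) := mul_pos hγ (sub_pos.2 hα₁)
  have hlarge : ∀ᶠ n : ℕ in atTop, 2 ≤ Real.exp (γ * (1 - α) * n) :=
    (Real.tendsto_exp_atTop.comp
      (tendsto_natCast_atTop_atTop.const_mul_atTop hε)).eventually_ge_atTop 2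
  obtain ⟨N, hTN, hN, hN1⟩ :=
    ((hLip _ hε).and_eventually (hlarge.and (eventually_ge_atTop 1))).exists
  have hrate : Real.exp (γ * (1 - α) * N) = Real.exp (γ * N) ^ (1 - α) := by
    rw [← Real.exp_mul, mul_right_comm]
  rw [hrate] at hTN hN
  have hattrN : ∀ m, MapsTo (T^[N])^[m] U (cthickening (C / Real.exp (γ * N) ^ m) A) := by
    intro m
    convert hattr (N * m) using 1
    · rw [Function.iterate_mul]
    · rw [div_eq_mul_inv, ← Real.exp_nat_mul, ← Real.exp_neg]
      push_cast
      ring_nf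
  have hq : 1 < Real.exp (γ * N) := Real.one_lt_exp_iff.2 (by positivity)
  exact ⟨N, hN1, fun δ hδ₀ hδ₁ S A' hA'U hTS hS ↦ subset_cthickening_mul_rpow hC hq hα₀ hα₁.le
    hN hδ₀ hδ₁ (hTU.iterate N) hattrN hTN hA'U (hS.iterate N) hTS⟩

end PseudoMetricSpace

/-- Continuity of attractors: if `A` attracts `U` exponentially, the Lipschitz
constants `L n` of `T^[n]` on `U` satisfy `limsup n / ln (L n) = +∞`, then there is
`C₃ > 0` such that for each `α ∈ (0,1)` there is `N ≥ 1` with the property: whenever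
`S^[N]` is uniformly `δ`-close to `T^[N]` on `U` and `A' ⊆ U` consists of points lying
on bi-infinite orbits of `S` in `A'`, then `dist_H(A', A) ≤ C₃ δ^α`. -/
theorem stmt17 {M : Type*} [MetricSpace M] (T : M → M)
    (A U : Set M) (hA : A.Nonempty) (hAU : A ⊆ U) (hTU : Set.MapsTo T U U)
    (C γ : ℝ) (hC : 1 < C) (hγ : 0 < γ)
    (hattr : ∀ n : ℕ, ∀ x ∈ U, Metric.infDist (T^[n] x) A ≤ C * Real.exp (-γ * n))
    (L₁ : ℝ) (hL₁ : 1 < L₁) (L : ℕ → ℝ)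
    (hLn : ∀ n : ℕ, 1 ≤ n → 1 < L n ∧ L n ≤ L₁ ^ n ∧
      ∀ x ∈ U, ∀ y ∈ U, dist (T^[n] x) (T^[n] y) ≤ L n * dist x y)
    (hlimsup : ∀ R : ℝ, ∃ᶠ n : ℕ in Filter.atTop, R ≤ (n : ℝ) / Real.log (L n)) :
    ∃ C₃ > 0, ∀ α : ℝ, 0 < α → α < 1 → ∃ N : ℕ, 1 ≤ N ∧
      ∀ δ : ℝ, 0 < δ → δ < 1 → ∀ S : M → M,
        (∀ x ∈ U, dist (T^[N] x) (S^[N] x) ≤ δ) →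
        ∀ A' : Set M, A' ⊆ U →
          (∀ a ∈ A', ∃ ξ : ℤ → M, (∀ n : ℤ, ξ n ∈ A') ∧ ξ 0 = a ∧
            ∀ n : ℤ, S (ξ n) = ξ (n + 1)) →
          ∀ a' ∈ A', Metric.infDist a' A ≤ C₃ * δ ^ α := by
  refine ⟨2 + C, by linarith, fun α hα₀ hα₁ ↦ ?_⟩
  obtain ⟨N, hN, h⟩ := stmt17_general (A := A) hTU (by linarith) hγ
    (fun n x hx ↦ (mem_cthickening_iff_infDist_le hA (by positivity)).2 (hattr n x hx))
    (fun ε ↦ frequently_lipschitzOnWith_exp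
      ((eventually_ge_atTop 1).mono fun n hn ↦ ⟨(hLn n hn).1, (hLn n hn).2.2⟩) hlimsup) hα₀.le hα₁
  exact ⟨N, hN, fun δ hδ₀ hδ₁ S hTS A' hA'U horb a' ha' ↦
    (mem_cthickening_iff_infDist_le hA (by positivity)).1 <|
      h δ hδ₀ hδ₁.le S A' hA'U (fun x hx ↦ hTS x (hA'U hx))
        (surjOn_of_forall_exists_int_orbit horb) ha'⟩
end

section
/- Let X be a real Hilbert space and let S and U be closed subspaces of X with S ∩ U = {0} and S + U = X. Then the composition of the orthogonal projections satisfies ‖P_S ∘ P_U‖ < 1, where P_S and P_U denote the orthogonal projections of X onto S and onto U, and ‖·‖ is the operator norm. -/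
/-!
Two closed subspaces `S` and `U` with `S ∩ U = {0}` and closed sum meet at a positive angle: by the
open mapping theorem the addition map `U × S → X` is bounded below, so some `c > 0` satisfies
`c * ‖u‖ ≤ ‖u - s‖` for all `u ∈ U` and `s ∈ S`. Taking for `s` the projection of `u`, Pythagoras
gives `‖P_S u‖² = ‖u‖² - ‖u - P_S u‖² ≤ (1 - c²) * ‖u‖²`, hence `‖P_S ∘ P_U‖ ≤ √(1 - c²) < 1`.
-/

theorem exists_pos_mul_norm_le_norm_sub_of_disjoint {𝕜 X : Type*} [NontriviallyNormedField 𝕜]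
    [NormedAddCommGroup X] [NormedSpace 𝕜 X] [CompleteSpace X] {p q : Submodule 𝕜 X}
    (hp : IsClosed (p : Set X)) (hq : IsClosed (q : Set X)) (hpq : Disjoint p q)
    (hsup : IsClosed ((p ⊔ q : Submodule 𝕜 X) : Set X)) :
    ∃ c > 0, ∀ u ∈ p, ∀ v ∈ q, c * ‖u‖ ≤ ‖u - v‖ := by
  have := hp.completeSpace_coe
  have := hq.completeSpace_coe
  let sumMap : p × q →L[𝕜] X := p.subtypeL.coprod q.subtypeL
  have sumMap_injective : Function.Injective sumMap := by
    refine LinearMap.ker_eq_bot.1 ?_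
    rw [ContinuousLinearMap.ker_coprod_of_disjoint_range (by simpa using hpq)]
    simp
  have sumMap_isClosed_range : IsClosed (Set.range sumMap) := by
    rwa [Submodule.sup_eq_range] at hsup
  obtain ⟨c, hc, hsumMap⟩ := antilipschitzWith_iff_exists_mul_le_norm.1
    (sumMap.antilipschitz_of_injective_of_isClosed_range sumMap_injective sumMap_isClosed_range)
  refine ⟨c, hc, fun u hu v hv ↦ ?_⟩
  calc c * ‖u‖ ≤ c * ‖((⟨u, hu⟩, -⟨v, hv⟩) : p × q)‖ := by
        gcongr
        exact norm_fst_le ((⟨u, hu⟩, -⟨v, hv⟩) : p × q)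
    _ ≤ ‖sumMap (⟨u, hu⟩, -⟨v, hv⟩)‖ := hsumMap _
    _ = ‖u - v‖ := by simp [sumMap, sub_eq_add_neg]

section InnerProductSpace

variable {𝕜 X : Type*} [RCLike 𝕜] [NormedAddCommGroup X] [InnerProductSpace 𝕜 X]
  {S U : Submodule 𝕜 X} [S.HasOrthogonalProjection] [U.HasOrthogonalProjection] {c : ℝ}

theorem isClosed_of_hasOrthogonalProjection : IsClosed (S : Set X) :=
  S.orthogonal_orthogonal ▸ Sᗮ.isClosed_orthogonal

theorem norm_starProjection_le_sqrt_mul_norm (hc : 0 ≤ c) {x : X}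
    (hx : c * ‖x‖ ≤ ‖x - S.starProjection x‖) :
    ‖S.starProjection x‖ ≤ √(1 - c ^ 2) * ‖x‖ := by
  have pythagoras : ‖x‖ ^ 2 = ‖S.starProjection x‖ ^ 2 + ‖x - S.starProjection x‖ ^ 2 := by
    simpa only [Submodule.starProjection_orthogonal_val]
      using S.norm_sq_eq_add_norm_sq_starProjection x
  have hx_sq : (c * ‖x‖) ^ 2 ≤ ‖x - S.starProjection x‖ ^ 2 := by gcongr
  calc ‖S.starProjection x‖ ≤ √((1 - c ^ 2) * ‖x‖ ^ 2) := Real.le_sqrt_of_sq_le (by linarith)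
    _ = √(1 - c ^ 2) * ‖x‖ := by
      rw [Real.sqrt_mul' _ (sq_nonneg _), Real.sqrt_sq (norm_nonneg x)]

theorem opNorm_starProjection_comp_starProjection_le_sqrt (hc : 0 ≤ c)
    (hSU : ∀ u ∈ U, c * ‖u‖ ≤ ‖u - S.starProjection u‖) :
    ‖S.starProjection ∘L U.starProjection‖ ≤ √(1 - c ^ 2) := by
  refine ContinuousLinearMap.opNorm_le_bound _ (Real.sqrt_nonneg _) fun x ↦ ?_
  calc ‖S.starProjection (U.starProjection x)‖
      ≤ √(1 - c ^ 2) * ‖U.starProjection x‖ :=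
        norm_starProjection_le_sqrt_mul_norm hc (hSU _ (U.starProjection_apply_mem x))
    _ ≤ √(1 - c ^ 2) * ‖x‖ := by gcongr; exact U.norm_starProjection_apply_le x

theorem stmt18_general [CompleteSpace X] (hSU : Disjoint S U)
    (hsup : IsClosed ((S ⊔ U : Submodule 𝕜 X) : Set X)) :
    ‖S.starProjection ∘L U.starProjection‖ < 1 := by
  obtain ⟨c, hc, hangle⟩ := exists_pos_mul_norm_le_norm_sub_of_disjoint
    isClosed_of_hasOrthogonalProjection isClosed_of_hasOrthogonalProjection hSU.symm
    (by rwa [sup_comm])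
  calc ‖S.starProjection ∘L U.starProjection‖ ≤ √(1 - c ^ 2) :=
        opNorm_starProjection_comp_starProjection_le_sqrt hc.le fun u hu ↦
          hangle u hu _ (S.starProjection_apply_mem u)
    _ < 1 := by
      rw [Real.sqrt_lt' one_pos, one_pow]
      exact sub_lt_self 1 (pow_pos hc 2)

end InnerProductSpace

theorem IsOrthoProjOn.eq_starProjection_s18 {X : Type*} [NormedAddCommGroup X] [InnerProductSpace ℝ X]
    {E : Submodule ℝ X} [E.HasOrthogonalProjection] {P : X →L[ℝ] X} (hP : IsOrthoProjOn E P) :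
    P = E.starProjection :=
  ContinuousLinearMap.ext fun x ↦
    (Submodule.eq_starProjection_of_mem_orthogonal (hP x).1 (hP x).2).symm

/-- If `S` and `U` are closed subspaces of a real Hilbert space with `S ∩ U = {0}`
and `S + U = X`, then the composition of the orthogonal projections onto `S` and
onto `U` has operator norm strictly less than `1`. -/
theorem stmt18 {X : Type*} [NormedAddCommGroup X] [InnerProductSpace ℝ X] [CompleteSpace X]
    (S U : Submodule ℝ X)
    (hS : IsClosed ((S : Submodule ℝ X) : Set X)) (hU : IsClosed ((U : Submodule ℝ X) : Set X))
    (hinf : S ⊓ U = ⊥) (hsup : S ⊔ U = ⊤)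
    (PS PU : X →L[ℝ] X) (hPS : IsOrthoProjOn S PS) (hPU : IsOrthoProjOn U PU) :
    ‖PS.comp PU‖ < 1 := by
  have := hS.completeSpace_coe
  have := hU.completeSpace_coe
  rw [hPS.eq_starProjection_s18, hPU.eq_starProjection_s18]
  exact stmt18_general (disjoint_iff.2 hinf) (by simp [hsup])
end

section
/- Let (E_k)_{k∈ℤ} be a family of real Banach spaces, and for each k ∈ ℤ let A_k : E_k → E_{k+1} be a bounded linear map, let w_{k+1} : E_k → E_{k+1} be a map, and set φ_k := A_k + w_{k+1} (pointwise). Assume there exist bounded idempotent operators P_k, Q_k on E_k and constants λ ∈ (0,1), M > 0, Δ > 0, k₁ > 0 such that for all k ∈ ℤ: (1) P_k + Q_k = Id, ‖P_k‖ ≤ M, ‖Q_k‖ ≤ M, ‖A_k ∘ P_k‖ ≤ λ, and range(A_k ∘ P_k) ⊆ range(P_{k+1}); (2) there are bounded linear maps B_k : E_{k+1} → E_k with B_k(range(Q_{k+1})) ⊆ range(Q_k), ‖B_k ∘ Q_{k+1}‖ ≤ λ, and A_k(B_k y) = y for every y ∈ range(Q_{k+1}); (3) ‖w_{k+1}(v)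 − w_{k+1}(v')‖ ≤ k₁‖v − v'‖ whenever ‖v‖ ≤ Δ and ‖v'‖ ≤ Δ; (4) k₁ N₁ < 1 where N₁ = M(1+λ)/(1−λ). Then there exist d₁ > 0 and L > 0 such that: if δ satisfies 0 ≤ δ ≤ d₁ and ‖φ_k(0)‖ ≤ δ for all k ∈ ℤ, then there exist vectors v_k ∈ E_k with ‖v_k‖ ≤ L δ and φ_k(v_k) = v_{k+1} for all k ∈ ℤ. -/
/-!
A bounded sequence `v` is an element of the Banach space `ℓ^∞(E)`. The hyperbolic splitting solves
the inhomogeneous linear equation `v (k + 1) = A k (v k) + g (k + 1)` there: the `P`-part of `g` is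
transported forward by the contraction `A P` and its `Q`-part backward by the contraction `B Q`, so
two Neumann series give a linear solution operator `G : g ↦ v` of norm at most
`N = M (1 + λ) / (1 - λ)`. An orbit of `A + w` is a fixed point of `v ↦ G (w ∘ v)`, which is
`k₁ N`-Lipschitz on the ball of radius `Δ`, and Banach's theorem applies because `k₁ N < 1`. The
argument works over any index set, with a permutation `σ` in place of `k ↦ k + 1`.
-/

open Metric Function
open scoped ENNReal NNReal

theorem exists_isFixedPt_mem_closedBall_of_lipschitzOnWith {X : Type*} [MetricSpace X]
    [CompleteSpace X] {f : X → X} {x₀ : X} {r : ℝ} {K : ℝ≥0} (hK : K < 1)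
    (hf : LipschitzOnWith K f (closedBall x₀ r)) (hx₀ : dist (f x₀) x₀ ≤ (1 - K) * r) :
    ∃ x ∈ closedBall x₀ r, IsFixedPt f x := by
  have hK' : 0 < 1 - (K : ℝ) := sub_pos.2 (by exact_mod_cast hK)
  have hr : 0 ≤ r := nonneg_of_mul_nonneg_right (dist_nonneg.trans hx₀) hK'
  have hcenter : x₀ ∈ closedBall x₀ r := mem_closedBall_self hr
  have hmaps : Set.MapsTo f (closedBall x₀ r) (closedBall x₀ r) := fun x hx =>
    calc dist (f x) x₀ ≤ dist (f x) (f x₀) + dist (f x₀) x₀ := dist_triangle _ _ _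
      _ ≤ K * r + (1 - K) * r := by
        gcongr
        exact (hf.dist_le_mul x hx x₀ hcenter).trans (by gcongr; exact hx)
      _ = r := by ring
  obtain ⟨x, hx, hfx, -⟩ := ContractingWith.exists_fixedPoint' isClosed_closedBall.isComplete hmaps
    ⟨hK, hf.mapsToRestrict hmaps⟩ hcenter (edist_ne_top _ _)
  exact ⟨x, hx, hfx⟩

theorem exists_norm_le_inv_and_eq_apply_add {𝕜 X : Type*} [NontriviallyNormedField 𝕜]
    [NormedAddCommGroup X] [NormedSpace 𝕜 X] [CompleteSpace X] {S : X →L[𝕜] X} {c : ℝ}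
    (hS : ‖S‖ ≤ c) (hc : c < 1) :
    ∃ R : X →L[𝕜] X, ‖R‖ ≤ (1 - c)⁻¹ ∧ ∀ x, R x = S (R x) + x := by
  have hS1 : ‖S‖ < 1 := hS.trans_lt hc
  refine ⟨∑' n, S ^ n, ?_, fun x => ?_⟩
  · calc ‖∑' n, S ^ n‖ ≤ ‖(1 : X →L[𝕜] X)‖ - 1 + (1 - ‖S‖)⁻¹ :=
          tsum_geometric_le_of_norm_lt_one S hS1
      _ ≤ 0 + (1 - c)⁻¹ := by
        gcongr
        exact sub_nonpos.2 ContinuousLinearMap.norm_id_le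
      _ = (1 - c)⁻¹ := zero_add _
  · have h := DFunLike.congr_fun (mul_neg_geom_series S hS1) x
    simp only [sub_mul, one_mul, sub_apply, one_apply_eq_self] at h
    exact sub_eq_iff_eq_add'.1 h

section BoundedFamilies

variable {ι : Type*} {E F : ι → Type*} [∀ i, NormedAddCommGroup (E i)]
  [∀ i, NormedAddCommGroup (F i)]

theorem memℓp_infty_of_forall_norm_le {f : ∀ i, E i} {C : ℝ} (hf : ∀ i, ‖f i‖ ≤ C) :
    Memℓp f ∞ :=
  memℓp_infty ⟨C, Set.forall_mem_range.2 hf⟩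

theorem exists_lp_superposition {w : ∀ i, E i → F i} {K : ℝ≥0} {r δ : ℝ} (hr : 0 ≤ r)
    (hδ : 0 ≤ δ) (hw : ∀ i, LipschitzOnWith K (w i) (closedBall 0 r)) (hw0 : ∀ i, ‖w i 0‖ ≤ δ) :
    ∃ W : lp E ∞ → lp F ∞, LipschitzOnWith K W (closedBall 0 r) ∧ ‖W 0‖ ≤ δ ∧
      ∀ v ∈ closedBall 0 r, ∀ i, W v i = w i (v i) := by
  have hball : ∀ v ∈ closedBall (0 : lp E ∞) r, ∀ i, v i ∈ closedBall (0 : E i) r :=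
    fun v hv i => mem_closedBall_zero_iff.2 <|
      (lp.norm_apply_le_norm ENNReal.top_ne_zero v i).trans (mem_closedBall_zero_iff.1 hv)
  have hbdd : ∀ v ∈ closedBall (0 : lp E ∞) r, ∀ i, ‖w i (v i)‖ ≤ K * r + δ := fun v hv i =>
    calc ‖w i (v i)‖ ≤ ‖w i (v i) - w i 0‖ + ‖w i 0‖ := norm_le_norm_sub_add _ _
      _ ≤ K * r + δ := by
        gcongr
        · refine ((hw i).norm_sub_le (hball v hv i) (mem_closedBall_self hr)).trans ?_
          rw [sub_zero]
          gcongr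
          exact mem_closedBall_zero_iff.1 (hball v hv i)
        · exact hw0 i
  have hex : ∀ v : lp E ∞, ∃ u : lp F ∞, v ∈ closedBall 0 r → ∀ i, u i = w i (v i) := fun v => by
    by_cases hv : v ∈ closedBall 0 r
    · exact ⟨⟨_, memℓp_infty_of_forall_norm_le (hbdd v hv)⟩, fun _ _ => rfl⟩
    · exact ⟨0, fun h => absurd h hv⟩
  choose W hW using hex
  refine ⟨W, LipschitzOnWith.of_dist_le_mul fun u hu v hv => ?_, ?_, hW⟩
  · rw [dist_eq_norm]
    refine lp.norm_le_of_forall_le (by positivity) fun i => ?_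
    calc ‖(W u - W v) i‖ = ‖w i (u i) - w i (v i)‖ := by
          rw [lp.coeFn_sub, Pi.sub_apply, hW u hu, hW v hv]
      _ ≤ K * ‖u i - v i‖ := (hw i).norm_sub_le (hball u hu i) (hball v hv i)
      _ ≤ K * dist u v := by
        gcongr
        rw [dist_eq_norm]
        exact lp.norm_apply_le_norm ENNReal.top_ne_zero (u - v) i
  · refine lp.norm_le_of_forall_le hδ fun i => ?_
    rw [hW 0 (mem_closedBall_self hr)]
    exact hw0 i

end BoundedFamilies

section Reindex

variable {ι κ 𝕜 : Type*} [NontriviallyNormedField 𝕜] {E : κ → Type*}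
  [∀ k, NormedAddCommGroup (E k)] [∀ k, NormedSpace 𝕜 (E k)]

variable (𝕜 E) in
/-- Reindexing of bounded families along a bijection `σ`, as an isometry `ℓ^∞(E ∘ σ) ≃ ℓ^∞(E)`. On
`ℤ` with `σ k = k + 1` it is the shift. -/
noncomputable def lpInftyReindex (σ : ι ≃ κ) : lp (fun i => E (σ i)) ∞ ≃ₗᵢ[𝕜] lp E ∞ where
  toFun f := ⟨Equiv.piCongrLeft E σ f, memℓp_infty_of_forall_norm_le (C := ‖f‖) <|
    σ.forall_congr_right.1 fun i => by
      rw [Equiv.piCongrLeft_apply_apply]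
      exact lp.norm_apply_le_norm ENNReal.top_ne_zero f i⟩
  invFun f := ⟨fun i => f (σ i), memℓp_infty_of_forall_norm_le fun i =>
    lp.norm_apply_le_norm ENNReal.top_ne_zero f (σ i)⟩
  map_add' f g := lp.ext <| funext <| σ.forall_congr_right.1 fun i => by
    simp only [lp.coeFn_add, Pi.add_apply, Equiv.piCongrLeft_apply_apply]
  map_smul' c f := lp.ext <| funext <| σ.forall_congr_right.1 fun i => by
    simp only [RingHom.id_apply, lp.coeFn_smul, Pi.smul_apply, Equiv.piCongrLeft_apply_apply]
  left_inv f := lp.ext <| funext fun i => Equiv.piCongrLeft_apply_apply E σ f i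
  right_inv f := lp.ext <| funext <| σ.forall_congr_right.1 fun i =>
    Equiv.piCongrLeft_apply_apply E σ (fun j => f (σ j)) i
  norm_map' f := by
    simp only [lp.norm_eq_ciSup]
    refine (σ.iSup_congr fun i => ?_).symm
    exact congrArg norm (Equiv.piCongrLeft_apply_apply E σ f i)

theorem lpInftyReindex_apply_apply (σ : ι ≃ κ) (f : lp (fun i => E (σ i)) ∞) (i : ι) :
    lpInftyReindex 𝕜 E σ f (σ i) = f i :=
  Equiv.piCongrLeft_apply_apply E σ f i

end Reindex

section HyperbolicSplitting

variable {ι 𝕜 : Type*} [NontriviallyNormedField 𝕜] {E : ι → Type*}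
  [∀ k, NormedAddCommGroup (E k)] [∀ k, NormedSpace 𝕜 (E k)]

/-- A uniformly hyperbolic splitting, with rate `lam` and projection bound `M`, of the linear
cocycle `A k : E k → E (σ k)` over the permutation `σ`: `P k` and `Q k` are the projections to the
stable and unstable subspaces, and `B k` is a right inverse of `A k` on the unstable subspace. -/
structure IsHyperbolicSplitting (σ : Equiv.Perm ι) (A : ∀ k, E k →L[𝕜] E (σ k))
    (P Q : ∀ k, E k →L[𝕜] E k) (B : ∀ k, E (σ k) →L[𝕜] E k) (lam M : ℝ) : Prop where
  P_comp_P : ∀ k, (P k).comp (P k) = P k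
  P_add_Q : ∀ k, P k + Q k = ContinuousLinearMap.id 𝕜 (E k)
  norm_P_le : ∀ k, ‖P k‖ ≤ M
  norm_Q_le : ∀ k, ‖Q k‖ ≤ M
  norm_A_comp_P_le : ∀ k, ‖(A k).comp (P k)‖ ≤ lam
  range_A_comp_P_le : ∀ k, LinearMap.range ((A k).comp (P k)).toLinearMap ≤
    LinearMap.range (P (σ k)).toLinearMap
  B_mem_range_Q : ∀ k, ∀ y ∈ LinearMap.range (Q (σ k)).toLinearMap,
    B k y ∈ LinearMap.range (Q k).toLinearMap
  norm_B_comp_Q_le : ∀ k, ‖(B k).comp (Q (σ k))‖ ≤ lam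
  A_B_of_mem_range_Q : ∀ k, ∀ y ∈ LinearMap.range (Q (σ k)).toLinearMap, A k (B k y) = y
  rate_nonneg : 0 ≤ lam
  rate_lt_one : lam < 1
  bound_pos : 0 < M

namespace IsHyperbolicSplitting

variable {σ : Equiv.Perm ι} {A : ∀ k, E k →L[𝕜] E (σ k)} {P Q : ∀ k, E k →L[𝕜] E k}
  {B : ∀ k, E (σ k) →L[𝕜] E k} {lam M : ℝ}

theorem P_P_apply (h : IsHyperbolicSplitting σ A P Q B lam M) (k : ι) (x : E k) :
    P k (P k x) = P k x :=
  DFunLike.congr_fun (h.P_comp_P k) x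

theorem P_apply_add_Q_apply (h : IsHyperbolicSplitting σ A P Q B lam M) (k : ι) (x : E k) :
    P k x + Q k x = x :=
  DFunLike.congr_fun (h.P_add_Q k) x

theorem Q_Q_apply (h : IsHyperbolicSplitting σ A P Q B lam M) (k : ι) (x : E k) :
    Q k (Q k x) = Q k x := by
  have hPQ : P k (Q k x) = 0 := by
    have hPx := congrArg (P k) (h.P_apply_add_Q_apply k x)
    rwa [map_add, h.P_P_apply, add_eq_left] at hPx
  simpa only [hPQ, zero_add] using h.P_apply_add_Q_apply k (Q k x)

theorem P_A_P_apply (h : IsHyperbolicSplitting σ A P Q B lam M) (k : ι) (x : E k) :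
    P (σ k) (A k (P k x)) = A k (P k x) := by
  obtain ⟨y, hy : P (σ k) y = A k (P k x)⟩ := h.range_A_comp_P_le k ⟨x, rfl⟩
  rw [← hy, h.P_P_apply]

theorem Q_B_Q_apply (h : IsHyperbolicSplitting σ A P Q B lam M) (k : ι) (x : E (σ k)) :
    Q k (B k (Q (σ k) x)) = B k (Q (σ k) x) := by
  obtain ⟨y, hy : Q k y = B k (Q (σ k) x)⟩ := h.B_mem_range_Q k _ ⟨x, rfl⟩
  rw [← hy, h.Q_Q_apply]

theorem A_B_Q_apply (h : IsHyperbolicSplitting σ A P Q B lam M) (k : ι) (x : E (σ k)) :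
    A k (B k (Q (σ k) x)) = Q (σ k) x :=
  h.A_B_of_mem_range_Q k _ ⟨x, rfl⟩

/-- The transfer operator `(A P a) (σ k) = A k (P k (a k))` of the stable part on `ℓ^∞(E)`. -/
noncomputable def stableTransfer (h : IsHyperbolicSplitting σ A P Q B lam M) :
    lp E ∞ →L[𝕜] lp E ∞ :=
  (lpInftyReindex 𝕜 E σ).toLinearIsometry.toContinuousLinearMap ∘L
    lp.mapCLM ∞ (fun k => (A k).comp (P k)) h.rate_nonneg h.norm_A_comp_P_le

theorem stableTransfer_apply (h : IsHyperbolicSplitting σ A P Q B lam M) (a : lp E ∞) (k : ι) :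
    h.stableTransfer a (σ k) = A k (P k (a k)) :=
  lpInftyReindex_apply_apply (𝕜 := 𝕜) σ _ k

/-- The backward transfer operator `(B Q b) k = B k (Q (σ k) (b (σ k)))` of the unstable part on
`ℓ^∞(E)`. -/
noncomputable def unstableTransfer (h : IsHyperbolicSplitting σ A P Q B lam M) :
    lp E ∞ →L[𝕜] lp E ∞ :=
  lp.mapCLM ∞ (fun k => (B k).comp (Q (σ k))) h.rate_nonneg h.norm_B_comp_Q_le ∘L
    (lpInftyReindex 𝕜 E σ).symm.toLinearIsometry.toContinuousLinearMap

theorem unstableTransfer_apply (h : IsHyperbolicSplitting σ A P Q B lam M) (b : lp E ∞) (k : ι) :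
    h.unstableTransfer b k = B k (Q (σ k) (b (σ k))) :=
  rfl

theorem norm_stableTransfer_le (h : IsHyperbolicSplitting σ A P Q B lam M) :
    ‖h.stableTransfer‖ ≤ lam :=
  (LinearIsometry.norm_toContinuousLinearMap_comp _).trans_le (lp.norm_mapCLM_le _ _ _ _)

theorem norm_unstableTransfer_le (h : IsHyperbolicSplitting σ A P Q B lam M) :
    ‖h.unstableTransfer‖ ≤ lam :=
  (ContinuousLinearMap.opNorm_comp_linearIsometryEquiv _ (lpInftyReindex 𝕜 E σ).symm).trans_le
    (lp.norm_mapCLM_le _ _ _ _)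

variable [∀ k, CompleteSpace (E k)]

theorem exists_solution_stable (h : IsHyperbolicSplitting σ A P Q B lam M) :
    ∃ G : lp E ∞ →L[𝕜] lp E ∞, ‖G‖ ≤ (1 - lam)⁻¹ * M ∧
      ∀ g k, G g (σ k) = A k (G g k) + P (σ k) (g (σ k)) := by
  obtain ⟨R, hR, hRS⟩ := exists_norm_le_inv_and_eq_apply_add h.norm_stableTransfer_le h.rate_lt_one
  let Pdiag : lp E ∞ →L[𝕜] lp E ∞ := lp.mapCLM ∞ P h.bound_pos.le h.norm_P_le
  have hstep : ∀ g k, R (Pdiag g) (σ k) = A k (P k (R (Pdiag g) k)) + P (σ k) (g (σ k)) :=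
    fun g k =>
      calc R (Pdiag g) (σ k) = h.stableTransfer (R (Pdiag g)) (σ k) + Pdiag g (σ k) :=
            congrArg (fun u : lp E ∞ => u (σ k)) (hRS (Pdiag g))
        _ = A k (P k (R (Pdiag g) k)) + P (σ k) (g (σ k)) := by rw [h.stableTransfer_apply]; rfl
  have hP : ∀ g k, P k (R (Pdiag g) k) = R (Pdiag g) k := fun g =>
    σ.forall_congr_right.1 fun k => by rw [hstep, map_add, h.P_A_P_apply, h.P_P_apply]
  refine ⟨R ∘L Pdiag, ?_, fun g k => (hstep g k).trans ?_⟩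
  · exact (R.opNorm_comp_le Pdiag).trans <|
      mul_le_mul_of_nonneg hR (lp.norm_mapCLM_le _ _ _ _) (norm_nonneg _) h.bound_pos.le
  · rw [hP, ContinuousLinearMap.comp_apply]

theorem exists_solution_unstable (h : IsHyperbolicSplitting σ A P Q B lam M) :
    ∃ G : lp E ∞ →L[𝕜] lp E ∞, ‖G‖ ≤ lam * ((1 - lam)⁻¹ * M) ∧
      ∀ g k, G g (σ k) = A k (G g k) + Q (σ k) (g (σ k)) := by
  obtain ⟨R, hR, hRS⟩ :=
    exists_norm_le_inv_and_eq_apply_add h.norm_unstableTransfer_le h.rate_lt_one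
  let Qdiag : lp E ∞ →L[𝕜] lp E ∞ := lp.mapCLM ∞ Q h.bound_pos.le h.norm_Q_le
  have hstep : ∀ g k, R (Qdiag g) k = h.unstableTransfer (R (Qdiag g)) k + Q k (g k) :=
    fun g k => congrArg (fun u : lp E ∞ => u k) (hRS (Qdiag g))
  have hQ : ∀ g k, Q k (R (Qdiag g) k) = R (Qdiag g) k := fun g k => by
    rw [hstep, map_add, h.unstableTransfer_apply, h.Q_B_Q_apply, h.Q_Q_apply]
  have hA : ∀ g k, A k (h.unstableTransfer (R (Qdiag g)) k) = R (Qdiag g) (σ k) := fun g k => by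
    rw [h.unstableTransfer_apply, h.A_B_Q_apply, hQ]
  refine ⟨-(h.unstableTransfer ∘L (R ∘L Qdiag)), ?_, fun g k => ?_⟩
  · have hRQ : ‖R ∘L Qdiag‖ ≤ (1 - lam)⁻¹ * M := (R.opNorm_comp_le Qdiag).trans <|
      mul_le_mul_of_nonneg hR (lp.norm_mapCLM_le _ _ _ _) (norm_nonneg _) h.bound_pos.le
    rw [norm_neg]
    exact (h.unstableTransfer.opNorm_comp_le _).trans <|
      mul_le_mul h.norm_unstableTransfer_le hRQ (norm_nonneg _) h.rate_nonneg
  · change -h.unstableTransfer (R (Qdiag g)) (σ k) =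
      A k (-h.unstableTransfer (R (Qdiag g)) k) + Q (σ k) (g (σ k))
    rw [map_neg, hA, hstep g (σ k)]
    abel

theorem exists_solution (h : IsHyperbolicSplitting σ A P Q B lam M) :
    ∃ G : lp E ∞ →L[𝕜] lp E ∞, ‖G‖ ≤ M * (1 + lam) / (1 - lam) ∧
      ∀ g k, G g (σ k) = A k (G g k) + g (σ k) := by
  obtain ⟨Gs, hGs, hsol_s⟩ := h.exists_solution_stable
  obtain ⟨Gu, hGu, hsol_u⟩ := h.exists_solution_unstable
  refine ⟨Gs + Gu, ?_, fun g k => ?_⟩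
  · calc ‖Gs + Gu‖ ≤ (1 - lam)⁻¹ * M + lam * ((1 - lam)⁻¹ * M) := norm_add_le_of_le hGs hGu
      _ = M * (1 + lam) / (1 - lam) := by ring
  · calc (Gs + Gu) g (σ k)
        = A k (Gs g k) + P (σ k) (g (σ k)) + (A k (Gu g k) + Q (σ k) (g (σ k))) :=
          congrArg₂ (· + ·) (hsol_s g k) (hsol_u g k)
      _ = A k (Gs g k + Gu g k) + (P (σ k) (g (σ k)) + Q (σ k) (g (σ k))) := by
          rw [map_add]; abel
      _ = A k ((Gs + Gu) g k) + g (σ k) := by rw [h.P_apply_add_Q_apply]; rfl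

end IsHyperbolicSplitting

theorem exists_orbit_norm_le_of_solution [∀ k, CompleteSpace (E k)] {σ : Equiv.Perm ι}
    {A : ∀ k, E k →L[𝕜] E (σ k)} {w : ∀ k, E k → E (σ k)} {G : lp E ∞ →L[𝕜] lp E ∞} {K : ℝ≥0}
    {δ r : ℝ} (hG : ∀ g k, G g (σ k) = A k (G g k) + g (σ k)) (hKG : ‖G‖₊ * K < 1) (hδ : 0 ≤ δ)
    (hr : ‖G‖ * δ ≤ (1 - ‖G‖ * K) * r) (hw : ∀ k, LipschitzOnWith K (w k) (closedBall 0 r))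
    (hw0 : ∀ k, ‖w k 0‖ ≤ δ) :
    ∃ v : ∀ k, E k, (∀ k, ‖v k‖ ≤ r) ∧ ∀ k, A k (v k) + w k (v k) = v (σ k) := by
  have hr0 : 0 ≤ r :=
    nonneg_of_mul_nonneg_right ((mul_nonneg (norm_nonneg G) hδ).trans hr)
      (sub_pos.2 (by exact_mod_cast hKG))
  obtain ⟨W, hWlip, hW0, hW⟩ := exists_lp_superposition hr0 hδ hw hw0
  let shift := lpInftyReindex 𝕜 E σ
  have hlip : LipschitzOnWith (‖G‖₊ * K) (fun v => G (shift (W v))) (closedBall 0 r) := by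
    simpa only [one_mul, comp_def] using
      G.lipschitz.comp_lipschitzOnWith (shift.lipschitz.comp_lipschitzOnWith hWlip)
  have hcenter : dist (G (shift (W 0))) 0 ≤ (1 - ‖G‖ * K) * r :=
    calc dist (G (shift (W 0))) 0 = ‖G (shift (W 0))‖ := dist_zero_right _
      _ ≤ ‖G‖ * δ := G.le_opNorm_of_le ((shift.norm_map _).trans_le hW0)
      _ ≤ (1 - ‖G‖ * K) * r := hr
  obtain ⟨v, hv, hfix : G (shift (W v)) = v⟩ :=
    exists_isFixedPt_mem_closedBall_of_lipschitzOnWith hKG hlip hcenter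
  refine ⟨v, fun k => (lp.norm_apply_le_norm ENNReal.top_ne_zero v k).trans
    (mem_closedBall_zero_iff.1 hv), fun k => ?_⟩
  have h := hG (shift (W v)) k
  rwa [hfix, lpInftyReindex_apply_apply, hW v hv, eq_comm] at h

theorem stmt19_general [∀ k, CompleteSpace (E k)] (σ : Equiv.Perm ι)
    (A : ∀ k, E k →L[𝕜] E (σ k)) (w : ∀ k, E k → E (σ k)) (P Q : ∀ k, E k →L[𝕜] E k)
    (B : ∀ k, E (σ k) →L[𝕜] E k) (lam M Δ k₁ : ℝ) (h : IsHyperbolicSplitting σ A P Q B lam M)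
    (hΔ : 0 < Δ) (hk₁ : 0 ≤ k₁)
    (hw : ∀ k (v v' : E k), ‖v‖ ≤ Δ → ‖v'‖ ≤ Δ → ‖w k v - w k v'‖ ≤ k₁ * ‖v - v'‖)
    (hsmall : k₁ * (M * (1 + lam) / (1 - lam)) < 1) :
    ∃ d₁ > 0, ∃ L > 0, ∀ δ : ℝ, 0 ≤ δ → δ ≤ d₁ → (∀ k, ‖A k 0 + w k 0‖ ≤ δ) →
      ∃ v : ∀ k, E k, (∀ k, ‖v k‖ ≤ L * δ) ∧ ∀ k, A k (v k) + w k (v k) = v (σ k) := by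
  obtain ⟨G, hGN, hG⟩ := h.exists_solution
  set N := M * (1 + lam) / (1 - lam)
  lift k₁ to ℝ≥0 using hk₁
  have hN : 0 < N := div_pos (mul_pos h.bound_pos (by linarith [h.rate_nonneg]))
    (sub_pos.2 h.rate_lt_one)
  have hgap : 0 < 1 - k₁ * N := sub_pos.2 hsmall
  have hGgap : 1 - k₁ * N ≤ 1 - ‖G‖ * k₁ := by
    rw [mul_comm ‖G‖]
    gcongr
  obtain ⟨L, hL, hLN⟩ : ∃ L > 0, (1 - k₁ * N) * L = N :=
    ⟨N / (1 - k₁ * N), div_pos hN hgap, mul_div_cancel₀ N hgap.ne'⟩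
  refine ⟨Δ / L, div_pos hΔ hL, L, hL, fun δ hδ hδΔ hφ => ?_⟩
  have hball : ∀ k, ∀ v ∈ closedBall (0 : E k) (L * δ), ‖v‖ ≤ Δ :=
    fun k v hv => (mem_closedBall_zero_iff.1 hv).trans ((le_div_iff₀' hL).1 hδΔ)
  refine exists_orbit_norm_le_of_solution (K := k₁) hG ?_ hδ ?_
    (fun k => LipschitzOnWith.of_dist_le_mul fun v hv v' hv' => ?_) fun k => ?_
  · exact_mod_cast sub_pos.1 (hgap.trans_le hGgap)
  · calc ‖G‖ * δ ≤ N * δ := by gcongr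
      _ = (1 - k₁ * N) * (L * δ) := by rw [← mul_assoc, hLN]
      _ ≤ (1 - ‖G‖ * k₁) * (L * δ) := by gcongr
  · simpa only [dist_eq_norm] using hw k v v' (hball k v hv) (hball k v' hv')
  · simpa only [map_zero, zero_add] using hφ k

end HyperbolicSplitting

/-- Abstract shadowing via the Banach fixed point theorem: given a bi-infinite family
of Banach spaces `E k` and maps `φ k = A k + w k : E k → E (k+1)` admitting uniformly
bounded hyperbolic splittings `P k + Q k = Id` with contraction constant `λ`, inverse
maps `B k` on the unstable parts, Lipschitz-small nonlinearities `w k`, and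
`k₁ · M(1+λ)/(1−λ) < 1`, there exist `d₁, L > 0` such that whenever `‖φ k (0)‖ ≤ δ ≤ d₁`
for all `k`, there are vectors `v k ∈ E k` with `‖v k‖ ≤ L δ` and `φ k (v k) = v (k+1)`. -/
theorem stmt19 (E : ℤ → Type*) [∀ k, NormedAddCommGroup (E k)] [∀ k, NormedSpace ℝ (E k)]
    [∀ k, CompleteSpace (E k)]
    (A : ∀ k : ℤ, E k →L[ℝ] E (k + 1))
    (w : ∀ k : ℤ, E k → E (k + 1))
    (P Q : ∀ k : ℤ, E k →L[ℝ] E k)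
    (B : ∀ k : ℤ, E (k + 1) →L[ℝ] E k)
    (lam M Δ k₁ : ℝ) (hlam0 : 0 < lam) (hlam1 : lam < 1) (hM : 0 < M)
    (hΔ : 0 < Δ) (hk₁ : 0 < k₁)
    (hPidem : ∀ k, (P k).comp (P k) = P k)
    (hQidem : ∀ k, (Q k).comp (Q k) = Q k)
    (hPQ : ∀ k, P k + Q k = ContinuousLinearMap.id ℝ (E k))
    (hPnorm : ∀ k, ‖P k‖ ≤ M) (hQnorm : ∀ k, ‖Q k‖ ≤ M)
    (hAP : ∀ k, ‖(A k).comp (P k)‖ ≤ lam)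
    (hAPrange : ∀ k, LinearMap.range ((A k).comp (P k)).toLinearMap ≤ LinearMap.range (P (k + 1)).toLinearMap)
    (hBrange : ∀ k, ∀ y ∈ LinearMap.range (Q (k + 1)).toLinearMap, B k y ∈ LinearMap.range (Q k).toLinearMap)
    (hBnorm : ∀ k, ‖(B k).comp (Q (k + 1))‖ ≤ lam)
    (hAB : ∀ k, ∀ y ∈ LinearMap.range (Q (k + 1)).toLinearMap, A k (B k y) = y)
    (hw : ∀ (k : ℤ) (v v' : E k), ‖v‖ ≤ Δ → ‖v'‖ ≤ Δ → ‖w k v - w k v'‖ ≤ k₁ * ‖v - v'‖)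
    (hsmall : k₁ * (M * (1 + lam) / (1 - lam)) < 1) :
    ∃ d₁ > 0, ∃ L > 0, ∀ δ : ℝ, 0 ≤ δ → δ ≤ d₁ →
      (∀ k : ℤ, ‖A k 0 + w k 0‖ ≤ δ) →
      ∃ v : (k : ℤ) → E k, (∀ k : ℤ, ‖v k‖ ≤ L * δ) ∧
        ∀ k : ℤ, A k (v k) + w k (v k) = v (k + 1) :=
  stmt19_general (Equiv.addRight (1 : ℤ)) A w P Q B lam M Δ k₁
    ⟨hPidem, hPQ, hPnorm, hQnorm, hAP, hAPrange, hBrange, hBnorm, hAB, hlam0.le, hlam1, hM⟩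
    hΔ hk₁.le hw hsmall
end
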